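/- Fix an algebraic closure Ω of the field ℚ_2 of 2-adic numbers. There are exactly three intermediate fields E of Ω over ℚ_2 such that E is a finite Galois extension of ℚ_2 whose Galois group Gal(E / ℚ_2) is isomorphic to the symmetric group S_4 on four letters. -/

import Mathlib

section GaloisPart

variable {k Ω : Type} [Field k] [Field Ω] [Algebra k Ω]

/-- Elements fixed by every automorphism come from the base field. -/
theorem dy_fix [IsGalois k Ω] {x : Ω} (h : ∀ σ : Ω ≃ₐ[k] Ω, σ x = x) :
    ∃ q : k, algebraMap k Ω q = x := by
  have := (InfiniteGalois.mem_range_algebraMap_iff_fixed (k := k) (K := Ω) x).2 h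
  exact this

theorem dy_mem_of_fix [IsGalois k Ω] (F : IntermediateField k Ω) {x : Ω}
    (h : ∀ σ : Ω ≃ₐ[k] Ω, (∀ y ∈ F, σ y = y) → σ x = x) : x ∈ F := by
  rw [← InfiniteGalois.fixedField_fixingSubgroup F, IntermediateField.mem_fixedField_iff]
  intro σ hσ
  exact h σ ((IntermediateField.mem_fixingSubgroup_iff F σ).1 hσ)

theorem dy_adjoin_fix (S : Set Ω) (σ : Ω ≃ₐ[k] Ω) (h : ∀ y ∈ S, σ y = y) :
    ∀ y ∈ IntermediateField.adjoin k S, σ y = y := by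
  intro y hy
  induction hy using IntermediateField.adjoin_induction with
  | mem x hx => exact h x hx
  | algebraMap x => simp
  | add x y _ _ hx hy => simp [hx, hy]
  | inv x _ hx => simp [hx]
  | mul x y _ _ hx hy => simp [hx, hy]

/-- Comparison of adjunctions through automorphisms. -/
theorem dy_adjoin_le [IsGalois k Ω] (S T : Set Ω)
    (h : ∀ σ : Ω ≃ₐ[k] Ω, (∀ y ∈ T, σ y = y) → ∀ y ∈ S, σ y = y) :
    IntermediateField.adjoin k S ≤ IntermediateField.adjoin k T := by
  rw [IntermediateField.adjoin_le_iff]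
  intro x hx
  apply dy_mem_of_fix
  intro σ hσ
  exact h σ (fun y hy => hσ y (IntermediateField.subset_adjoin k T hy)) x hx

theorem dy_fixL [IsGalois k Ω] {p x : Ω} (hp : p ^ 3 = 2)
    (h : ∀ σ : Ω ≃ₐ[k] Ω, σ p = p → σ x = x) :
    ∃ a b c : k, x = algebraMap k Ω a + algebraMap k Ω b * p + algebraMap k Ω c * p ^ 2 := by
  have hx : x ∈ IntermediateField.adjoin k {p} := by
    apply dy_mem_of_fix
    intro σ hσ
    exact h σ (hσ p (IntermediateField.mem_adjoin_simple_self k p))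
  have hi : IsAlgebraic k p := Algebra.IsAlgebraic.isAlgebraic p
  have hx' : x ∈ (IntermediateField.adjoin k {p}).toSubalgebra := hx
  rw [IntermediateField.adjoin_simple_toSubalgebra_of_isAlgebraic hi] at hx'
  clear h hx
  induction hx' using Algebra.adjoin_induction with
  | mem y hy => 
    obtain rfl : y = p := hy
    exact ⟨0, 1, 0, by simp⟩
  | algebraMap r => exact ⟨r, 0, 0, by simp⟩
  | add y z hy hz h1 h2 =>
    obtain ⟨a, b, c, rfl⟩ := h1
    obtain ⟨a', b', c', rfl⟩ := h2
    refine ⟨a + a', b + b', c + c', ?_⟩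
    simp only [map_add]; ring
  | mul y z hy hz h1 h2 =>
    obtain ⟨a, b, c, rfl⟩ := h1
    obtain ⟨a', b', c', rfl⟩ := h2
    refine ⟨a * a' + 2 * (b * c' + c * b'), a * b' + b * a' + 2 * (c * c'),
      a * c' + b * b' + c * a', ?_⟩
    simp only [map_add, map_mul, map_ofNat]
    linear_combination (algebraMap k Ω b * algebraMap k Ω c' + algebraMap k Ω c * algebraMap k Ω b' +
      algebraMap k Ω c * algebraMap k Ω c' * p) * hp

/-- Kummer-type lemma for quadratic extensions. -/
theorem dy_quad (H : Subgroup (Ω ≃ₐ[k] Ω)) {g b : Ω}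
    (hg : ∀ σ ∈ H, σ g = g ∨ σ g = -g) (hb : ∀ σ ∈ H, σ b = b ∨ σ b = -b)
    (h : ∀ σ ∈ H, σ b = b → σ g = g) :
    (∀ σ ∈ H, σ g = g) ∨ (∀ σ ∈ H, σ (g * b) = g * b) := by
  by_cases h1 : ∀ σ ∈ H, σ b = b
  · left; intro σ hσ; exact h σ hσ (h1 σ hσ)
  push Not at h1
  obtain ⟨τ, hτ, hτb⟩ := h1
  have hτb' := (hb τ hτ).resolve_left hτb
  have key : ∀ σ ∈ H, σ b = -b → σ (τ g) = g := by
    intro σ hσ hσb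
    have := h (σ * τ) (H.mul_mem hσ hτ) (by simp [AlgEquiv.mul_apply, hτb', hσb])
    simpa [AlgEquiv.mul_apply] using this
  rcases hg τ hτ with h2 | h2
  · left
    intro σ hσ
    rcases hb σ hσ with h3 | h3
    · exact h σ hσ h3
    · simpa [h2] using key σ hσ h3
  · right
    intro σ hσ
    rcases hb σ hσ with h3 | h3
    · simp [h σ hσ h3, h3]
    · have := key σ hσ h3
      rw [h2, map_neg] at this
      rw [map_mul, h3]
      linear_combination b * this

/-- The fields with group `S₄`. -/
def DyS4 (E : IntermediateField k Ω) : Prop :=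
  FiniteDimensional k ↥E ∧ IsGalois k ↥E ∧
      Nonempty ((↥E ≃ₐ[k] ↥E) ≃* Equiv.Perm (Fin 4))

theorem dy_s4_of_tuple [IsGalois k Ω] (θ : Fin 4 → Ω) (hinj : Function.Injective θ)
    (hσ : ∀ (σ : Ω ≃ₐ[k] Ω) i, ∃ j, σ (θ i) = θ j)
    (hd : ∃ σ : Ω ≃ₐ[k] Ω, σ (θ 0) = θ 1 ∧ σ (θ 1) = θ 0 ∧ σ (θ 2) = θ 3 ∧ σ (θ 3) = θ 2)
    (hc : ∃ σ : Ω ≃ₐ[k] Ω, σ (θ 0) = θ 0 ∧ σ (θ 1) = θ 2 ∧ σ (θ 2) = θ 3 ∧ σ (θ 3) = θ 1)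
    (ht : ∃ σ : Ω ≃ₐ[k] Ω, σ (θ 0) = θ 0 ∧ σ (θ 1) = θ 1 ∧ σ (θ 2) = θ 3 ∧ σ (θ 3) = θ 2) :
    DyS4 (IntermediateField.adjoin k (Set.range θ)) := by
  set E := IntermediateField.adjoin k (Set.range θ) with hE
  have hfd : FiniteDimensional k ↥E := by
    have : Finite (Set.range θ) := Set.finite_range θ
    exact IntermediateField.finiteDimensional_adjoin
      (fun x _ => Algebra.IsIntegral.isIntegral x)
  have hN : Normal k E := by
    rw [IntermediateField.normal_iff_forall_map_le']
    intro σ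
    rw [hE, IntermediateField.adjoin_map]
    apply IntermediateField.adjoin.mono
    rintro _ ⟨_, ⟨i, rfl⟩, rfl⟩
    obtain ⟨j, hj⟩ := hσ σ i
    exact ⟨j, hj.symm⟩
  have hG : IsGalois k E := { }
  refine ⟨hfd, hG, ?_⟩
  choose f hf using hσ
  have hfmul : ∀ σ τ i, f (σ * τ) i = f σ (f τ i) := by
    intro σ τ i
    apply hinj
    rw [← hf, AlgEquiv.mul_apply, hf, hf]
  have hfone : ∀ i, f 1 i = i := by
    intro i; apply hinj; rw [← hf]; rfl
  let φ : (Ω ≃ₐ[k] Ω) →* Equiv.Perm (Fin 4) :=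
    { toFun := fun σ => ⟨f σ, f σ⁻¹, fun i => by rw [← hfmul]; simp [hfone],
        fun i => by rw [← hfmul]; simp [hfone]⟩
      map_one' := by ext i; simp [hfone]
      map_mul' := by intro σ τ; ext i; simp [hfmul] }
  have hφ : ∀ σ i, σ (θ i) = θ (φ σ i) := hf
  have hsurj : Function.Surjective φ := by
    rw [← MonoidHom.range_eq_top, eq_top_iff]
    obtain ⟨d, d0, d1, d2, d3⟩ := hd
    obtain ⟨c, c0, c1, c2, c3⟩ := hc
    obtain ⟨t, t0, t1, t2, t3⟩ := ht
    have hd : φ d = Equiv.swap 0 1 * Equiv.swap 2 3 := by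
      ext i; congr 1; apply hinj; rw [← hφ]; fin_cases i <;> simp_all <;> congr 1
    have hc : φ c = Equiv.swap 1 2 * Equiv.swap 2 3 := by
      ext i; congr 1; apply hinj; rw [← hφ]; fin_cases i <;> simp_all <;> congr 1
    have ht : φ t = Equiv.swap 2 3 := by
      ext i; congr 1; apply hinj; rw [← hφ]; fin_cases i <;> simp_all <;> congr 1
    have h23 : Equiv.swap (2 : Fin 4) 3 ∈ φ.range := ⟨t, ht⟩
    have h12 : Equiv.swap (1 : Fin 4) 2 ∈ φ.range := by
      refine ⟨c * t, ?_⟩; rw [map_mul, hc, ht]; decide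
    have h01 : Equiv.swap (0 : Fin 4) 1 ∈ φ.range := by
      refine ⟨d * t, ?_⟩; rw [map_mul, hd, ht]; decide
    have key : ∀ g : Equiv.Perm (Fin 4), ∃ x y z : Fin 2, ∃ u v : Fin 2, ∃ w : Fin 2,
      g = (Equiv.swap 0 1) ^ (x : ℕ) * ((Equiv.swap 1 2) ^ (y : ℕ) * (Equiv.swap 0 1) ^ (z : ℕ)) *
        ((Equiv.swap 2 3) ^ (u : ℕ) * (Equiv.swap 1 2) ^ (v : ℕ) * (Equiv.swap 0 1) ^ (w : ℕ)) := by
      decide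
    intro g _
    obtain ⟨x, y, z, u, v, w, rfl⟩ := key g
    apply_rules [Subgroup.mul_mem, Subgroup.pow_mem]
  have hker : φ.ker = E.fixingSubgroup := by
    ext σ
    rw [MonoidHom.mem_ker, IntermediateField.mem_fixingSubgroup_iff]
    constructor
    · intro h
      apply dy_adjoin_fix
      rintro _ ⟨i, rfl⟩
      rw [hφ, h]; rfl
    · intro h
      ext i
      congr 1
      apply hinj
      rw [← hφ, h _ (IntermediateField.subset_adjoin k _ ⟨i, rfl⟩)]; rfl
  have e1 := QuotientGroup.quotientKerEquivOfSurjective φ hsurj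
  have e2 := QuotientGroup.quotientKerEquivOfSurjective
    (AlgEquiv.restrictNormalHom (F := k) (K₁ := Ω) E)
    (AlgEquiv.restrictNormalHom_surjective (F := k) (K₁ := E) Ω)
  have h3 : (AlgEquiv.restrictNormalHom (F := k) (K₁ := Ω) E).ker = φ.ker := by
    rw [hker]; exact E.restrictNormalHom_ker
  exact ⟨e2.symm.trans ((QuotientGroup.quotientMulEquivOfEq h3).trans e1)⟩

theorem dy_tuple_of_s4 [IsGalois k Ω] [CharZero k] (E : IntermediateField k Ω) (hE : DyS4 E) :
    ∃ θ : Fin 4 → Ω, Function.Injective θ ∧ ∑ i, θ i = 0 ∧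
      (∀ (σ : Ω ≃ₐ[k] Ω), ∃ p : Equiv.Perm (Fin 4), ∀ i, σ (θ i) = θ (p i)) ∧
      (∀ p : Equiv.Perm (Fin 4), ∃ σ : Ω ≃ₐ[k] Ω, ∀ i, σ (θ i) = θ (p i)) ∧
      E = IntermediateField.adjoin k (Set.range θ) := by
  obtain ⟨hfd, hG, ⟨φ⟩⟩ := hE
  let H : Subgroup (E ≃ₐ[k] E) := (MulAction.stabilizer (Equiv.Perm (Fin 4)) (0 : Fin 4)).comap
    φ.toMonoidHom
  have hH : ∀ g, g ∈ H ↔ φ g 0 = 0 := fun g => Iff.rfl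
  obtain ⟨α, hα⟩ := Field.exists_primitive_element k (IntermediateField.fixedField H)
  have hst : ∀ g : E ≃ₐ[k] E, g (α : E) = α ↔ φ g 0 = 0 := by
    intro g
    rw [← hH]
    constructor
    · intro h
      rw [← IntermediateField.fixingSubgroup_fixedField H, IntermediateField.mem_fixingSubgroup_iff]
      intro x hx
      have hx2 : (⟨x, hx⟩ : IntermediateField.fixedField H) ∈ IntermediateField.adjoin k {α} := by
        rw [hα]; trivial
      have hx3 : x ∈ (IntermediateField.adjoin k {α}).map
          (IntermediateField.fixedField H).val := ⟨_, hx2, rfl⟩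
      rw [IntermediateField.adjoin_map] at hx3
      refine dy_adjoin_fix _ g ?_ x hx3
      rintro _ ⟨_, rfl, rfl⟩
      exact h
    · intro h
      have := α.2
      rw [IntermediateField.mem_fixedField_iff] at this
      exact this g h
  -- the conjugates
  let r : Fin 4 → (E ≃ₐ[k] E) := fun i => φ.symm (Equiv.swap 0 i)
  have hr : ∀ i, φ (r i) 0 = i := fun i => by simp [r]
  let β : Fin 4 → E := fun i => r i (α : E)
  have hβ : ∀ (g : E ≃ₐ[k] E) i, g (β i) = β (φ g i) := by
    intro g i
    have h1 : ((r (φ g i))⁻¹ * (g * r i)) (α : E) = α := by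
      rw [hst, map_mul, map_mul, map_inv]
      simp only [Equiv.Perm.mul_apply, hr]
      rw [Equiv.Perm.inv_eq_iff_eq, hr]
    rw [AlgEquiv.mul_apply, AlgEquiv.mul_apply] at h1
    have h2 := congrArg (r (φ g i)) h1
    rw [← AlgEquiv.mul_apply, mul_inv_cancel] at h2
    exact h2
  have hβinj : Function.Injective β := by
    intro i j hij
    have h1 : ((r j)⁻¹ * r i) (α : E) = α := by
      rw [AlgEquiv.mul_apply]
      change (r j)⁻¹ (β i) = α
      rw [hij]
      change ((r j)⁻¹ * (r j)) (α : E) = α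
      simp
    rw [hst, map_mul, map_inv, Equiv.Perm.mul_apply, hr, Equiv.Perm.inv_eq_iff_eq, hr] at h1
    exact h1
  have h4 : (4 : E) ≠ 0 := by
    have : CharZero E := charZero_of_injective_algebraMap (algebraMap k E).injective
    norm_num
  let s : E := (∑ i, β i) / 4
  have hs : ∀ g : E ≃ₐ[k] E, g s = s := by
    intro g
    simp only [s, map_div₀, map_sum, hβ, map_ofNat]
    congr 1
    exact Equiv.sum_comp (φ g) β
  have hθ : ∀ (g : E ≃ₐ[k] E) i, g (β i - s) = β (φ g i) - s := by
    intro g i; rw [map_sub, hβ, hs]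
  have hres : ∀ (σ : Ω ≃ₐ[k] Ω) (x : E),
      σ (x : Ω) = ((AlgEquiv.restrictNormalHom (F := k) (K₁ := Ω) E σ x : E) : Ω) := by
    intro σ x
    exact (AlgEquiv.restrictNormal_commutes σ E x).symm
  refine ⟨fun i => ((β i - s : E) : Ω), ?_, ?_, ?_, ?_, ?_⟩
  · intro i j hij
    have : β i - s = β j - s := Subtype.ext hij
    exact hβinj (sub_left_injective this)
  · rw [← IntermediateField.coe_sum, Finset.sum_sub_distrib]
    simp only [Finset.sum_const, Finset.card_univ, Fintype.card_fin, s]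
    have : (∑ i, β i) - 4 • ((∑ i, β i) / 4) = 0 := by
      rw [nsmul_eq_mul]; push_cast; field_simp; ring
    rw [this]; rfl
  · intro σ
    refine ⟨φ (AlgEquiv.restrictNormalHom (F := k) (K₁ := Ω) E σ), fun i => ?_⟩
    rw [hres, hθ]
  · intro p
    obtain ⟨σ, hσ⟩ := AlgEquiv.restrictNormalHom_surjective (F := k) (K₁ := E) Ω (φ.symm p)
    refine ⟨σ, fun i => ?_⟩
    rw [hres, hθ, hσ]; simp
  · apply le_antisymm
    · intro x hx
      apply dy_mem_of_fix
      intro σ hσ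
      have h1 : AlgEquiv.restrictNormalHom (F := k) (K₁ := Ω) E σ = 1 := by
        apply φ.injective
        rw [map_one]
        ext i
        congr 1
        have h2 := hσ _ (IntermediateField.subset_adjoin k _ ⟨i, rfl⟩)
        rw [hres, hθ] at h2
        have h3 := Subtype.ext h2
        exact hβinj (sub_left_injective h3)
      have := hres σ ⟨x, hx⟩
      rw [h1] at this
      exact this
    · rw [IntermediateField.adjoin_le_iff]
      rintro _ ⟨i, rfl⟩
      exact (β i - s).2

end GaloisPart

section ValuationPart

variable {Ω : Type} [Field Ω] [Algebra ℚ_[2] Ω]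

/-- The properties of the extension of the 2-adic absolute value that are used. -/
structure DyVal (v : Ω → ℝ) : Prop where
  nonneg : ∀ x, 0 ≤ v x
  mul : ∀ x y, v (x * y) = v x * v y
  add : ∀ x y, v (x + y) ≤ max (v x) (v y)
  gal : ∀ (σ : Ω ≃ₐ[ℚ_[2]] Ω) x, v (σ x) = v x
  ext : ∀ q : ℚ_[2], v (algebraMap ℚ_[2] Ω q) = ‖q‖
  pos : ∀ x, x ≠ 0 → 0 < v x

theorem dy_val_exists [Algebra.IsAlgebraic ℚ_[2] Ω] : ∃ v : Ω → ℝ, DyVal v := by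
  refine ⟨spectralNorm ℚ_[2] Ω, ?_, ?_, ?_, ?_, ?_, ?_⟩
  · exact spectralNorm_nonneg
  · intro x y
    exact map_mul (spectralMulAlgNorm ℚ_[2] Ω) x y
  · exact isNonarchimedean_spectralNorm
  · intro σ x; exact (spectralNorm_eq_of_equiv σ x).symm
  · exact spectralNorm_extends
  · intro x hx
    exact spectralNorm_zero_lt hx (Algebra.IsAlgebraic.isAlgebraic x)

namespace DyVal

variable {v : Ω → ℝ}

theorem zero (hv : DyVal v) : v 0 = 0 := by simpa using hv.ext 0
theorem one (hv : DyVal v) : v 1 = 1 := by simpa using hv.ext 1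
theorem two (hv : DyVal v) : v 2 = 1 / 2 := by
  have := hv.ext 2
  rw [map_ofNat] at this
  rw [this]
  have := Padic.norm_p (p := 2)
  norm_num at this ⊢
  exact this
theorem pow (hv : DyVal v) (x : Ω) (n : ℕ) : v (x ^ n) = v x ^ n := by
  induction n with
  | zero => simp [hv.one]
  | succ n ih => rw [pow_succ, pow_succ, hv.mul, ih]
theorem neg (hv : DyVal v) (x : Ω) : v (-x) = v x := by
  have h1 : v (-1) = 1 := by
    have := hv.ext (-1)
    simpa using this
  rw [← neg_one_mul, hv.mul, h1, one_mul]
theorem sub (hv : DyVal v) (x y : Ω) : v (x - y) ≤ max (v x) (v y) := by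
  rw [sub_eq_add_neg, ← hv.neg y]; exact hv.add _ _
theorem sub_comm (hv : DyVal v) (x y : Ω) : v (x - y) = v (y - x) := by
  rw [← hv.neg, neg_sub]
theorem add_lt (hv : DyVal v) {x y : Ω} {r : ℝ} (hx : v x < r) (hy : v y < r) : v (x + y) < r :=
  (hv.add x y).trans_lt (max_lt hx hy)
theorem sub_lt (hv : DyVal v) {x y : Ω} {r : ℝ} (hx : v x < r) (hy : v y < r) : v (x - y) < r :=
  (hv.sub x y).trans_lt (max_lt hx hy)
theorem add_le (hv : DyVal v) {x y : Ω} {r : ℝ} (hx : v x ≤ r) (hy : v y ≤ r) : v (x + y) ≤ r :=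
  (hv.add x y).trans (max_le hx hy)
theorem sub_le (hv : DyVal v) {x y : Ω} {r : ℝ} (hx : v x ≤ r) (hy : v y ≤ r) : v (x - y) ≤ r :=
  (hv.sub x y).trans (max_le hx hy)
theorem inv (hv : DyVal v) (x : Ω) : v x⁻¹ = (v x)⁻¹ := by
  by_cases hx : x = 0
  · simp [hx, hv.zero]
  · have : v x⁻¹ * v x = 1 := by rw [← hv.mul, inv_mul_cancel₀ hx, hv.one]
    exact eq_inv_of_mul_eq_one_left this
theorem div (hv : DyVal v) (x y : Ω) : v (x / y) = v x / v y := by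
  rw [div_eq_mul_inv, hv.mul, hv.inv, div_eq_mul_inv]
theorem three (hv : DyVal v) : v 3 = 1 := by
  have h : (3 : Ω) = 1 + 2 := by norm_num
  apply le_antisymm
  · rw [h]; exact hv.add_le hv.one.le (by rw [hv.two]; norm_num)
  · by_contra hlt
    push Not at hlt
    have : v ((3 : Ω) - 2) < 1 := hv.sub_lt hlt (by rw [hv.two]; norm_num)
    have h3 : (3 : Ω) - 2 = 1 := by norm_num
    rw [h3, hv.one] at this
    exact lt_irrefl _ this
theorem mul_le_one (hv : DyVal v) {x y : Ω} (hx : v x ≤ 1) (hy : v y ≤ 1) : v (x * y) ≤ 1 := by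
  rw [hv.mul]; exact mul_le_one₀ hx (hv.nonneg y) hy

theorem mul_lt_one (hv : DyVal v) {x y : Ω} (hx : v x < 1) (hy : v y ≤ 1) : v (x * y) < 1 := by
  rw [hv.mul]
  exact mul_lt_one_of_nonneg_of_lt_one_left (hv.nonneg x) hx hy

/-- The valuation ring. -/
def O (hv : DyVal v) : Subring Ω where
  carrier := {x | v x ≤ 1}
  mul_mem' := fun hx hy => hv.mul_le_one hx hy
  one_mem' := hv.one.le
  add_mem' := fun hx hy => hv.add_le hx hy
  zero_mem' := by simp [hv.zero]
  neg_mem' := fun {x} hx => by simpa [hv.neg] using hx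

theorem mem_O (hv : DyVal v) (x : Ω) : x ∈ hv.O ↔ v x ≤ 1 := Iff.rfl

theorem int_mem (hv : DyVal v) (z : ℤ_[2]) : algebraMap ℚ_[2] Ω (z : ℚ_[2]) ∈ hv.O := by
  rw [mem_O, hv.ext]; exact z.2

end DyVal

theorem dy_coe_two : ((2 : ℤ_[2]) : ℚ_[2]) = 2 := by
  have := PadicInt.coe_natCast (p := 2) 2
  exact_mod_cast this

theorem dy_norm_two : ‖(2 : ℚ_[2])‖ = 1 / 2 := by
  have := Padic.norm_p (p := 2)
  norm_num at this ⊢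
  exact this

theorem dy_parity (z : ℤ_[2]) : (∃ y, z = 2 * y) ∨ ∃ y, z = 2 * y + 1 := by
  have key : ∀ w : ℤ_[2], ‖w‖ < 1 → ∃ y, w = 2 * y := by
    intro w hw
    have := (PadicInt.norm_lt_one_iff_dvd w).1 hw
    obtain ⟨y, hy⟩ := this
    exact ⟨y, by simpa using hy⟩
  obtain ⟨n, hn⟩ := PadicInt.exists_mem_range (p := 2) z
  obtain ⟨h1, h2⟩ := hn
  have h3 : ‖z - (n : ℤ_[2])‖ < 1 := by
    rw [IsLocalRing.mem_maximalIdeal, PadicInt.mem_nonunits] at h2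
    exact h2
  obtain ⟨y, hy⟩ := key _ h3
  interval_cases n
  · left; exact ⟨y, by simpa using hy⟩
  · right; exact ⟨y, by rw [← hy]; simp⟩

theorem dy_lt_one {q : ℚ_[2]} (h : ‖q‖ < 1) : ∃ y : ℤ_[2], q = 2 * (y : ℚ_[2]) := by
  have := (PadicInt.norm_lt_one_iff_dvd (p := 2) ⟨q, h.le⟩).1 h
  obtain ⟨y, hy⟩ := this
  refine ⟨y, ?_⟩
  have := congrArg (fun z : ℤ_[2] => (z : ℚ_[2])) hy
  push_cast at this
  simpa only [dy_coe_two] using this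

theorem dy_unit {q : ℚ_[2]} (h : ‖q‖ = 1) : ∃ y : ℤ_[2], q = 2 * (y : ℚ_[2]) + 1 := by
  rcases dy_parity ⟨q, h.le⟩ with ⟨y, hy⟩ | ⟨y, hy⟩
  · have h1 := congrArg (fun z : ℤ_[2] => (z : ℚ_[2])) hy
    push_cast at h1
    simp only [dy_coe_two] at h1
    rw [h1] at h
    have h2 := Padic.norm_p (p := 2)
    have h3 : ‖(y : ℚ_[2])‖ ≤ 1 := y.2
    rw [norm_mul] at h
    norm_num at h2
    rw [h2] at h
    linarith
  · refine ⟨y, ?_⟩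
    have h1 := congrArg (fun z : ℤ_[2] => (z : ℚ_[2])) hy
    push_cast at h1
    simpa only [dy_coe_two] using h1

theorem dy_even_mul (z : ℤ_[2]) : ∃ f, z * (z + 1) = 2 * f := by
  rcases dy_parity z with ⟨y, rfl⟩ | ⟨y, rfl⟩
  · exact ⟨y * (2 * y + 1), by ring⟩
  · exact ⟨(2 * y + 1) * (y + 1), by ring⟩


theorem dy_omega {Ω : Type} [Field Ω] [IsAlgClosed Ω] : ∃ w : Ω, w ^ 2 + w + 1 = 0 := by
  have : (Polynomial.X ^ 2 + Polynomial.X + 1 : Polynomial Ω).degree ≠ 0 := by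
    have : (Polynomial.X ^ 2 + Polynomial.X + 1 : Polynomial Ω).degree = 2 := by compute_degree!
    rw [this]; norm_num
  obtain ⟨w, hw⟩ := IsAlgClosed.exists_root _ this
  refine ⟨w, ?_⟩
  simpa [Polynomial.IsRoot] using hw

/-- Square roots of elements close to one. -/
theorem dy_sqrt [IsAlgClosed Ω] {v : Ω → ℝ} (hv : DyVal v) {u : Ω} (hu : v (1 - u) < 1 / 4) :
    ∃ r : Ω, r ^ 2 = u ∧ ∀ σ : Ω ≃ₐ[ℚ_[2]] Ω, σ u = u → σ r = r := by
  have h1 : ∃ r : Ω, r ^ 2 = u ∧ v (1 - r) < 1 / 2 := by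
    obtain ⟨r, hr⟩ := IsAlgClosed.exists_pow_nat_eq u (n := 2) (by norm_num)
    have h2 : 1 - u = (1 - r) * (1 + r) := by rw [← hr]; ring
    rw [h2, hv.mul] at hu
    by_cases h3 : v (1 - r) < 1 / 2
    · exact ⟨r, hr, h3⟩
    · refine ⟨-r, by rw [neg_sq, hr], ?_⟩
      push Not at h3
      rw [sub_neg_eq_add]
      by_contra h4
      push Not at h4
      nlinarith
  obtain ⟨r, hr, hr1⟩ := h1
  refine ⟨r, hr, fun σ hσ => ?_⟩
  have h5 : σ r ^ 2 = r ^ 2 := by rw [← map_pow, hr, hσ]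
  rcases sq_eq_sq_iff_eq_or_eq_neg.1 h5 with h6 | h6
  · exact h6
  · exfalso
    have h7 : v (1 + r) < 1 / 2 := by
      have := hv.gal σ (1 - r)
      rw [map_sub, map_one, h6, sub_neg_eq_add] at this
      rw [this]; exact hr1
    have h8 := hv.add_lt hr1 h7
    have h9 : 1 - r + (1 + r) = 2 := by ring
    rw [h9, hv.two] at h8
    exact lt_irrefl _ h8

/-- Cube roots of elements close to one. -/
theorem dy_cbrt [IsAlgClosed Ω] {v : Ω → ℝ} (hv : DyVal v) {u : Ω} (hu : v (1 - u) < 1) :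
    ∃ r : Ω, r ^ 3 = u ∧ ∀ σ : Ω ≃ₐ[ℚ_[2]] Ω, σ u = u → σ r = r := by
  obtain ⟨w, hw⟩ := dy_omega (Ω := Ω)
  have hw3 : w ^ 3 = 1 := by linear_combination (w - 1) * hw
  have h1 : ∃ r : Ω, r ^ 3 = u ∧ v (1 - r) < 1 := by
    obtain ⟨r, hr⟩ := IsAlgClosed.exists_pow_nat_eq u (n := 3) (by norm_num)
    have h2 : 1 - u = (1 - r) * (1 - w * r) * (1 - w ^ 2 * r) := by
      rw [← hr]
      linear_combination (r - r ^ 2 * w + r ^ 3 * (w - 1)) * hw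
    rw [h2, hv.mul, hv.mul] at hu
    by_cases h3 : v (1 - r) < 1
    · exact ⟨r, hr, h3⟩
    by_cases h4 : v (1 - w * r) < 1
    · exact ⟨w * r, by rw [mul_pow, hw3, hr, one_mul], h4⟩
    · refine ⟨w ^ 2 * r, by rw [mul_pow, hr, ← pow_mul, mul_comm 2 3, pow_mul, hw3]; ring, ?_⟩
      push Not at h3 h4
      by_contra h5
      push Not at h5
      have := one_le_mul_of_one_le_of_one_le (one_le_mul_of_one_le_of_one_le h3 h4) h5
      linarith
  obtain ⟨r, hr, hr1⟩ := h1
  refine ⟨r, hr, fun σ hσ => ?_⟩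
  have h5 : σ r ^ 3 = r ^ 3 := by rw [← map_pow, hr, hσ]
  by_contra hne
  have h6 : v (1 - σ r) < 1 := by
    have := hv.gal σ (1 - r)
    rw [map_sub, map_one] at this
    rw [this]; exact hr1
  have h7 : (σ r) ^ 2 + σ r * r + r ^ 2 = 0 := by
    have : (σ r - r) * ((σ r) ^ 2 + σ r * r + r ^ 2) = 0 := by linear_combination h5
    exact (mul_eq_zero.1 this).resolve_left (sub_ne_zero.2 hne)
  have a1 : 1 - r ∈ hv.O := hr1.le
  have a2 : 1 - σ r ∈ hv.O := h6.le
  have a3 : r ∈ hv.O := by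
    have := hv.O.sub_mem hv.O.one_mem a1
    simpa using this
  have h8 : (3 : Ω) = (1 - σ r) * (3 - (1 - σ r) - (1 - r)) + (1 - r) * (3 - (1 - r)) := by
    linear_combination h7
  have h3 : (3 : Ω) ∈ hv.O := hv.three.le
  have h9 := hv.add_lt
    (hv.mul_lt_one h6 (hv.O.sub_mem (hv.O.sub_mem h3 a2) a1))
    (hv.mul_lt_one hr1 (hv.O.sub_mem h3 a1))
  rw [← h8, hv.three] at h9
  exact lt_irrefl _ h9

/-- The ramified case. -/
theorem dy_ram [IsAlgClosed Ω] {v : Ω → ℝ} (hv : DyVal v) {b1 b2 b3 : Ω} {e1 e2 e3 : ℚ_[2]}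
    (h1 : b1 + b2 + b3 = algebraMap ℚ_[2] Ω e1)
    (h2 : b1 * b2 + b1 * b3 + b2 * b3 = algebraMap ℚ_[2] Ω e2)
    (h3 : b1 * b2 * b3 = algebraMap ℚ_[2] Ω e3)
    (hb : v b1 ^ 3 = 1 / 2) (hb2 : v b2 = v b1) (hb3 : v b3 = v b1) :
    ∃ p : Ω, p ^ 3 = 2 ∧ ∀ σ : Ω ≃ₐ[ℚ_[2]] Ω, σ b1 = b1 → σ p = p := by
  have hlt : v b1 < 1 := by
    by_contra h
    push Not at h
    have := one_le_pow₀ (n := 3) h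
    linarith
  have hn := hv.nonneg b1
  have hsq : v b1 * v b1 < 1 := by nlinarith
  have he1 : ‖e1‖ < 1 := by
    rw [← hv.ext, ← h1]
    exact hv.add_lt (hv.add_lt hlt (by rwa [hb2])) (by rwa [hb3])
  have he2 : ‖e2‖ < 1 := by
    rw [← hv.ext, ← h2]
    exact hv.add_lt (hv.add_lt (by rwa [hv.mul, hb2]) (by rwa [hv.mul, hb3]))
      (by rwa [hv.mul, hb2, hb3])
  have he3 : ‖e3 / 2‖ = 1 := by
    rw [norm_div, dy_norm_two, ← hv.ext, ← h3, hv.mul, hv.mul, hb2, hb3]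
    have : v b1 * v b1 * v b1 = v b1 ^ 3 := by ring
    rw [this, hb]; norm_num
  obtain ⟨f1, hf1⟩ := dy_lt_one he1
  obtain ⟨f2, hf2⟩ := dy_lt_one he2
  obtain ⟨w, hw⟩ := dy_unit he3
  have he3' : e3 = 2 * (2 * w + 1) := by rw [← hw]; ring
  have h20 : (2 : Ω) ≠ 0 := by
    intro h; have := hv.two; rw [h, hv.zero] at this; norm_num at this
  have hcub : 1 - b1 ^ 3 / 2 = b1 * (algebraMap ℚ_[2] Ω f2 - algebraMap ℚ_[2] Ω f1 * b1)
      - 2 * algebraMap ℚ_[2] Ω w := by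
    rw [hf1, map_mul, map_ofNat] at h1
    rw [hf2, map_mul, map_ofNat] at h2
    rw [he3', map_mul, map_add, map_mul, map_ofNat, map_one] at h3
    field_simp
    linear_combination b1 * h2 - h3 - b1 ^ 2 * h1
  have hu : v (1 - b1 ^ 3 / 2) < 1 := by
    rw [hcub]
    refine hv.sub_lt (hv.mul_lt_one hlt ?_) ?_
    · exact hv.O.sub_mem (hv.int_mem _) (hv.O.mul_mem (hv.int_mem _) hlt.le)
    · exact hv.mul_lt_one (by rw [hv.two]; norm_num) (hv.int_mem _)
  obtain ⟨r, hr, hr2⟩ := dy_cbrt hv hu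
  have hb0 : b1 ≠ 0 := by
    rintro rfl
    rw [hv.zero] at hb; norm_num at hb
  refine ⟨b1 / r, ?_, fun σ hσ => ?_⟩
  · rw [div_pow, hr]
    field_simp
  · rw [map_div₀, hσ, hr2 σ (by rw [map_div₀, map_pow, hσ, map_ofNat])]

/-- The unramified case does not occur. -/
theorem dy_unram {v : Ω → ℝ} (hv : DyVal v) {a1 a2 a3 : Ω} {e1 e2 e3 : ℚ_[2]}
    (h1 : a1 + a2 + a3 = algebraMap ℚ_[2] Ω e1)
    (h2 : a1 * a2 + a1 * a3 + a2 * a3 = algebraMap ℚ_[2] Ω e2)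
    (h3 : a1 * a2 * a3 = algebraMap ℚ_[2] Ω e3)
    (hb : v a1 = 1) (hmin : ∀ y : ℚ_[2], 1 ≤ v (a1 - algebraMap ℚ_[2] Ω y))
    (c t : Ω ≃ₐ[ℚ_[2]] Ω) (c1 : c a1 = a2) (c2 : c a2 = a3) (c3 : c a3 = a1)
    (t1 : t a1 = a1) (t2 : t a2 = a3) (t3 : t a3 = a2) : False := by
  have hb2 : v a2 = 1 := by rw [← c1, hv.gal, hb]
  have hb3 : v a3 = 1 := by rw [← c2, hv.gal, hb2]
  have m1 : a1 ∈ hv.O := hb.le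
  have m2 : a2 ∈ hv.O := hb2.le
  have m3 : a3 ∈ hv.O := hb3.le
  have n1 : ‖e1‖ ≤ 1 := by
    rw [← hv.ext, ← h1]; exact hv.O.add_mem (hv.O.add_mem m1 m2) m3
  have n2 : ‖e2‖ ≤ 1 := by
    rw [← hv.ext, ← h2]
    exact hv.O.add_mem (hv.O.add_mem (hv.O.mul_mem m1 m2) (hv.O.mul_mem m1 m3))
      (hv.O.mul_mem m2 m3)
  have n3 : ‖e3‖ ≤ 1 := by
    rw [← hv.ext, ← h3]; exact hv.O.mul_mem (hv.O.mul_mem m1 m2) m3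
  have even : ∀ e : ℚ_[2], ‖e‖ ≤ 1 → ∃ f ∈ hv.O,
      algebraMap ℚ_[2] Ω e * (algebraMap ℚ_[2] Ω e + 1) = 2 * f := by
    intro e he
    obtain ⟨f, hf⟩ := dy_even_mul ⟨e, he⟩
    refine ⟨algebraMap ℚ_[2] Ω f, hv.int_mem f, ?_⟩
    have h0 := congrArg (fun z : ℤ_[2] => (z : ℚ_[2])) hf
    have h : e * (e + 1) = 2 * (f : ℚ_[2]) := by
      rw [← dy_coe_two]; exact h0
    have h' := congrArg (algebraMap ℚ_[2] Ω) h
    simpa only [map_mul, map_add, map_one, map_ofNat] using h'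
  obtain ⟨f1, hf1, k1⟩ := even e1 n1
  obtain ⟨f2, hf2, k2⟩ := even e2 n2
  obtain ⟨f3, hf3, k3⟩ := even e3 n3
  have l1 : algebraMap ℚ_[2] Ω e1 ∈ hv.O := by rw [hv.mem_O, hv.ext]; exact n1
  have l2 : algebraMap ℚ_[2] Ω e2 ∈ hv.O := by rw [hv.mem_O, hv.ext]; exact n2
  have l3 : algebraMap ℚ_[2] Ω e3 ∈ hv.O := by rw [hv.mem_O, hv.ext]; exact n3
  have hle := hmin (algebraMap ℚ ℚ_[2] 1)
  generalize hE1 : algebraMap ℚ_[2] Ω e1 = E1 at *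
  generalize hE2 : algebraMap ℚ_[2] Ω e2 = E2 at *
  generalize hE3 : algebraMap ℚ_[2] Ω e3 = E3 at *
  rw [map_one, map_one] at hle
  have hroot : a1 ^ 3 - E1 * a1 ^ 2 + E2 * a1 - E3 = 0 := by
    rw [← h1, ← h2, ← h3]; ring
  have key : (a1 ^ 2 - a1) * (a1 ^ 2 - a2) * (a1 ^ 2 - a3) =
      2 * (-f1 * a1 ^ 4 + (E2 - f2) * a1 ^ 2 - f3 + E1 * a1 ^ 5 - E2 * a1 ^ 4
        + (E3 + E1 * E2) * a1 ^ 3 - E1 * E3 * a1 ^ 2 + E2 * E3 * a1) := by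
    have : (a1 ^ 2 - a1) * (a1 ^ 2 - a2) * (a1 ^ 2 - a3) =
      a1 ^ 6 - E1 * a1 ^ 4 + E2 * a1 ^ 2 - E3 := by
      rw [← h1, ← h2, ← h3]; ring
    rw [this]
    linear_combination (a1 ^ 3 - E1 * a1 ^ 2 + E2 * a1 - E3) * hroot - a1 ^ 4 * k1
      - a1 ^ 2 * k2 - k3
  have hlt : v ((a1 ^ 2 - a1) * (a1 ^ 2 - a2) * (a1 ^ 2 - a3)) < 1 := by
    rw [key]
    refine hv.mul_lt_one (by rw [hv.two]; norm_num) ?_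
    change _ ∈ hv.O
    apply_rules [Subring.add_mem, Subring.mul_mem, Subring.sub_mem, Subring.neg_mem,
      Subring.pow_mem]
  have hA : v (a1 ^ 2 - a1) ≥ 1 := by
    have : a1 ^ 2 - a1 = a1 * (a1 - 1) := by ring
    rw [this, hv.mul, hb, one_mul]; exact hle
  have hsw : v (a1 ^ 2 - a2) = v (a1 ^ 2 - a3) := by
    rw [← hv.gal t (a1 ^ 2 - a2), map_sub, map_pow, t1, t2]
  have hB : v (a1 ^ 2 - a2) < 1 := by
    by_contra h
    push Not at h
    rw [hv.mul, hv.mul, ← hsw] at hlt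
    have := one_le_mul_of_one_le_of_one_le (one_le_mul_of_one_le_of_one_le hA h) h
    linarith
  have h23 : v (a2 - a3) < 1 := by
    have := hv.sub_lt (hsw ▸ hB : v (a1 ^ 2 - a3) < 1) hB
    have e : a1 ^ 2 - a3 - (a1 ^ 2 - a2) = a2 - a3 := by ring
    rwa [e] at this
  have h31 : v (a3 - a1) < 1 := by
    have := hv.gal c (a2 - a3)
    rw [map_sub, c2, c3] at this
    rwa [this]
  have h12 : v (a1 - a2) < 1 := by
    have := hv.gal c (a3 - a1)
    rw [map_sub, c3, c1] at this
    rwa [this]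
  have hfin := hmin (e1 / 3)
  have e : 3 * (a1 - algebraMap ℚ_[2] Ω (e1 / 3)) = (a1 - a2) - (a3 - a1) := by
    have h30 : (3 : Ω) ≠ 0 := by
      intro h; have := hv.three; rw [h, hv.zero] at this; norm_num at this
    rw [map_div₀, map_ofNat, hE1, ← h1]
    field_simp
    ring
  have := hv.sub_lt h12 h31
  rw [← e, hv.mul, hv.three, one_mul] at this
  linarith

theorem dy_minimize {v : Ω → ℝ} (hv : DyVal v) (a : Ω) :
    ∃ x : ℚ_[2], ∀ y : ℚ_[2], v (a - algebraMap ℚ_[2] Ω x) ≤ v (a - algebraMap ℚ_[2] Ω y) := by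
  have htri : ∀ x y : Ω, v (x + y) ≤ v x + v y := fun x y =>
    (hv.add x y).trans (max_le_add_of_nonneg (hv.nonneg x) (hv.nonneg y))
  have hlip : ∀ x y : ℚ_[2],
      v (a - algebraMap ℚ_[2] Ω x) ≤ v (a - algebraMap ℚ_[2] Ω y) + dist x y := by
    intro x y
    have h := htri (a - algebraMap ℚ_[2] Ω y) (algebraMap ℚ_[2] Ω (y - x))
    rw [hv.ext, map_sub, ← dist_eq_norm, dist_comm] at h
    refine le_trans (le_of_eq ?_) h
    congr 1; ring
  have hcont : Continuous fun x : ℚ_[2] => v (a - algebraMap ℚ_[2] Ω x) := by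
    have : LipschitzWith 1 fun x : ℚ_[2] => v (a - algebraMap ℚ_[2] Ω x) :=
      LipschitzWith.of_le_add hlip
    exact this.continuous
  apply hcont.exists_forall_le
  have h1 : ∀ x : ℚ_[2], ‖x‖ - v a ≤ v (a - algebraMap ℚ_[2] Ω x) := by
    intro x
    have h := htri a (-(a - algebraMap ℚ_[2] Ω x))
    have e : a + -(a - algebraMap ℚ_[2] Ω x) = algebraMap ℚ_[2] Ω x := by ring
    rw [e, hv.ext, hv.neg] at h
    linarith
  refine Filter.tendsto_atTop_mono h1 ?_
  exact Filter.tendsto_atTop_add_const_right _ _ (tendsto_norm_cocompact_atTop (E := ℚ_[2]))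

/-- Cubic extensions of `ℚ_2` with group `S₃` contain a cube root of `2`. -/
theorem dy_cubic [IsAlgClosed Ω] {v : Ω → ℝ} (hv : DyVal v) {a1 a2 a3 : Ω} {e1 e2 e3 : ℚ_[2]}
    (h1 : a1 + a2 + a3 = algebraMap ℚ_[2] Ω e1)
    (h2 : a1 * a2 + a1 * a3 + a2 * a3 = algebraMap ℚ_[2] Ω e2)
    (h3 : a1 * a2 * a3 = algebraMap ℚ_[2] Ω e3) (hne : a1 ≠ a2)
    (c t : Ω ≃ₐ[ℚ_[2]] Ω) (c1 : c a1 = a2) (c2 : c a2 = a3) (c3 : c a3 = a1)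
    (t1 : t a1 = a1) (t2 : t a2 = a3) (t3 : t a3 = a2) :
    ∃ p : Ω, p ^ 3 = 2 ∧ ∀ σ : Ω ≃ₐ[ℚ_[2]] Ω, σ a1 = a1 → σ p = p := by
  obtain ⟨x, hx⟩ := dy_minimize hv a1
  -- reduce to the translated situation
  suffices H : ∀ (a1 a2 a3 : Ω) (e1 e2 e3 : ℚ_[2])
    (_ : a1 + a2 + a3 = algebraMap ℚ_[2] Ω e1)
    (_ : a1 * a2 + a1 * a3 + a2 * a3 = algebraMap ℚ_[2] Ω e2)
    (_ : a1 * a2 * a3 = algebraMap ℚ_[2] Ω e3) (_ : a1 ≠ a2)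
    (_ : c a1 = a2) (_ : c a2 = a3) (_ : c a3 = a1)
    (_ : t a1 = a1) (_ : t a2 = a3) (_ : t a3 = a2)
    (_ : ∀ y : ℚ_[2], v a1 ≤ v (a1 - algebraMap ℚ_[2] Ω y)),
    ∃ p : Ω, p ^ 3 = 2 ∧ ∀ σ : Ω ≃ₐ[ℚ_[2]] Ω, σ a1 = a1 → σ p = p by
    obtain ⟨p, hp, hp2⟩ := H (a1 - algebraMap ℚ_[2] Ω x) (a2 - algebraMap ℚ_[2] Ω x)
      (a3 - algebraMap ℚ_[2] Ω x) (e1 - 3 * x) (e2 - 2 * x * e1 + 3 * x ^ 2)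
      (e3 - x * e2 + x ^ 2 * e1 - x ^ 3)
      (by simp only [map_sub, map_mul, map_ofNat, ← h1]; ring)
      (by simp only [map_sub, map_add, map_mul, map_pow, map_ofNat, ← h1, ← h2]; ring)
      (by simp only [map_sub, map_add, map_mul, map_pow, ← h1, ← h2, ← h3]; ring)
      (fun h => hne (sub_left_injective h))
      (by simp [c1]) (by simp [c2]) (by simp [c3]) (by simp [t1]) (by simp [t2]) (by simp [t3])
      (by
        intro y
        have := hx (x + y)
        rwa [map_add, ← sub_sub] at this)
    exact ⟨p, hp, fun σ hσ => hp2 σ (by simp [hσ])⟩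
  clear! a1 a2 a3 e1 e2 e3 x
  intro a1 a2 a3 e1 e2 e3 h1 h2 h3 hne c1 c2 c3 t1 t2 t3 hmin
  have ha0 : a1 ≠ 0 := by
    rintro rfl
    rw [map_zero] at c1; exact hne c1
  have va2 : v a2 = v a1 := by rw [← c1, hv.gal]
  have va3 : v a3 = v a1 := by rw [← c2, hv.gal, va2]
  have hpos := hv.pos a1 ha0
  have hve : v a1 ^ 3 = ‖e3‖ := by
    rw [← hv.ext, ← h3, hv.mul, hv.mul, va2, va3]; ring
  have he30 : e3 ≠ 0 := by
    rintro rfl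
    rw [norm_zero] at hve
    have := pow_pos hpos 3
    linarith
  have hnm : v a1 ^ 3 = (2 : ℝ) ^ (-e3.valuation) := by
    rw [hve, Padic.norm_eq_zpow_neg_valuation he30]; norm_num
  generalize e3.valuation = m at hnm
  have v2z : ∀ q : ℤ, v ((2 : Ω) ^ q) = (2 : ℝ) ^ (-q) := by
    intro q
    have h := hv.ext ((2 : ℚ_[2]) ^ q)
    rw [map_zpow₀, map_ofNat, norm_zpow, dy_norm_two] at h
    rw [h, one_div, inv_zpow, zpow_neg]
  have h20 : (2 : Ω) ≠ 0 := by
    intro h; have := hv.two; rw [h, hv.zero] at this; norm_num at this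
  have gal2 : ∀ (σ : Ω ≃ₐ[ℚ_[2]] Ω) (q : ℤ), σ ((2 : Ω) ^ q) = 2 ^ q := by
    intro σ q; rw [map_zpow₀, map_ofNat]
  have hm : m = 3 * (m / 3) ∨ m = 3 * (m / 3) + 1 ∨ m = 3 * (m / 3) + 2 := by omega
  generalize m / 3 = q at hm
  rcases hm with hm | hm | hm
  · exfalso
    have hva : v a1 = 2 ^ (-q) := by
      have : v a1 ^ 3 = ((2 : ℝ) ^ (-q)) ^ 3 := by
        rw [hnm, hm, ← zpow_natCast, ← zpow_mul]; congr 1; push_cast; ring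
      exact (pow_left_inj₀ hpos.le (by positivity) (by norm_num)).1 this
    have hs0 : (2 : Ω) ^ q ≠ 0 := zpow_ne_zero _ h20
    have hs : algebraMap ℚ_[2] Ω (2 ^ q) = 2 ^ q := by rw [map_zpow₀, map_ofNat]
    refine dy_unram hv (a1 := a1 / 2 ^ q) (a2 := a2 / 2 ^ q) (a3 := a3 / 2 ^ q)
      (e1 := e1 / 2 ^ q) (e2 := e2 / (2 ^ q) ^ 2) (e3 := e3 / (2 ^ q) ^ 3) ?_ ?_ ?_ ?_ ?_ c t
      ?_ ?_ ?_ ?_ ?_ ?_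
    · rw [map_div₀, hs, ← h1]; ring
    · rw [map_div₀, map_pow, hs, ← h2]; ring
    · rw [map_div₀, map_pow, hs, ← h3]; ring
    · rw [hv.div, v2z, hva]; exact div_self (by positivity)
    · intro y
      have := hmin (2 ^ q * y)
      rw [map_mul, hs] at this
      have e : a1 / 2 ^ q - algebraMap ℚ_[2] Ω y = (a1 - 2 ^ q * algebraMap ℚ_[2] Ω y) / 2 ^ q := by
        field_simp
      rw [e, hv.div, v2z, ← hva, one_le_div hpos]
      exact this
    all_goals simp only [map_div₀, gal2, c1, c2, c3, t1, t2, t3]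
  · have hs : algebraMap ℚ_[2] Ω (2 ^ q) = 2 ^ q := by rw [map_zpow₀, map_ofNat]
    obtain ⟨p, hp, hp2⟩ := dy_ram hv (b1 := a1 / 2 ^ q) (b2 := a2 / 2 ^ q) (b3 := a3 / 2 ^ q)
      (e1 := e1 / 2 ^ q) (e2 := e2 / (2 ^ q) ^ 2) (e3 := e3 / (2 ^ q) ^ 3)
      (by rw [map_div₀, hs, ← h1]; ring) (by rw [map_div₀, map_pow, hs, ← h2]; ring)
      (by rw [map_div₀, map_pow, hs, ← h3]; ring)
      (by
        rw [hv.div, v2z, div_pow, hnm, hm, ← zpow_natCast, ← zpow_mul, ← zpow_sub₀ (by norm_num)]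
        have : -(3 * q + 1) - -q * ((3 : ℕ) : ℤ) = -1 := by push_cast; ring
        rw [this]; norm_num)
      (by rw [hv.div, hv.div, va2]) (by rw [hv.div, hv.div, va3])
    exact ⟨p, hp, fun σ hσ => hp2 σ (by rw [map_div₀, hσ, gal2])⟩
  · have hs : algebraMap ℚ_[2] Ω (2 ^ (2 * q + 1)) = 2 ^ (2 * q + 1) := by
      rw [map_zpow₀, map_ofNat]
    obtain ⟨p, hp, hp2⟩ := dy_ram hv (b1 := a1 ^ 2 / 2 ^ (2 * q + 1))
      (b2 := a2 ^ 2 / 2 ^ (2 * q + 1)) (b3 := a3 ^ 2 / 2 ^ (2 * q + 1))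
      (e1 := (e1 ^ 2 - 2 * e2) / 2 ^ (2 * q + 1))
      (e2 := (e2 ^ 2 - 2 * e1 * e3) / (2 ^ (2 * q + 1)) ^ 2)
      (e3 := e3 ^ 2 / (2 ^ (2 * q + 1)) ^ 3)
      (by
        rw [map_div₀, hs, map_sub, map_pow, map_mul, map_ofNat, ← h1, ← h2]; ring)
      (by
        rw [map_div₀, map_pow, hs, map_sub, map_pow, map_mul, map_mul, map_ofNat, ← h1, ← h2, ← h3]
        ring)
      (by rw [map_div₀, map_pow, map_pow, hs, ← h3]; ring)
      (by
        rw [hv.div, v2z, div_pow, hv.pow, ← pow_mul, mul_comm 2 3, pow_mul, hnm, hm,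
          ← zpow_natCast, ← zpow_natCast, ← zpow_mul, ← zpow_mul, ← zpow_sub₀ (by norm_num)]
        have : -(3 * q + 2) * ((2 : ℕ) : ℤ) - -(2 * q + 1) * ((3 : ℕ) : ℤ) = -1 := by
          push_cast; ring
        rw [this]; norm_num)
      (by rw [hv.div, hv.div, hv.pow, hv.pow, va2]) (by rw [hv.div, hv.div, hv.pow, hv.pow, va3])
    exact ⟨p, hp, fun σ hσ => hp2 σ (by rw [map_div₀, map_pow, hσ, gal2])⟩

end ValuationPart

section ArithmeticPart

theorem dy_odd_ne (m n : ℤ_[2]) : 2 * m ≠ 2 * n + 1 := by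
  intro h
  have h1 : (2 : ℤ_[2]) * (m - n) = 1 := by linear_combination h
  have h2 : IsUnit ((2 : ℕ) : ℤ_[2]) := IsUnit.of_mul_eq_one _ (by push_cast; exact h1)
  exact PadicInt.prime_p.not_isUnit h2

theorem dy_odd_isUnit (y : ℤ_[2]) : IsUnit (2 * y + 1) := by
  rw [PadicInt.isUnit_iff]
  by_contra h
  have h1 : ‖2 * y + 1‖ < 1 := lt_of_le_of_ne (PadicInt.norm_le_one _) h
  obtain ⟨z, hz⟩ := (PadicInt.norm_lt_one_iff_dvd _).1 h1
  exact dy_odd_ne z y (by push_cast at hz; exact hz.symm)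

theorem dy_int_of_le {q : ℚ_[2]} (h : ‖q‖ ≤ 1) : ∃ z : ℤ_[2], q = z := ⟨⟨q, h⟩, rfl⟩

theorem dy_neg_three (q : ℚ_[2]) : q ^ 2 ≠ -3 := by
  intro h
  have h3 : (-3 : ℚ_[2]) = ((-3 : ℤ_[2]) : ℚ_[2]) := by norm_cast
  have hq : ‖q‖ ≤ 1 := by
    by_contra hlt
    push Not at hlt
    have h1 : ‖q ^ 2‖ ≤ 1 := by rw [h, h3]; exact PadicInt.norm_le_one _
    rw [norm_pow] at h1
    have := one_lt_pow₀ hlt (n := 2) (by norm_num)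
    linarith
  obtain ⟨z, rfl⟩ := dy_int_of_le hq
  rw [h3] at h
  have hz : z ^ 2 = -3 := Subtype.ext (by rw [PadicInt.coe_pow]; exact h)
  rcases dy_parity z with ⟨y, rfl⟩ | ⟨y, rfl⟩
  · exact dy_odd_ne (2 * y ^ 2) (-2) (by linear_combination hz)
  · obtain ⟨f, hf⟩ := dy_even_mul y
    have h4 : (4 : ℤ_[2]) * (2 * f - (2 * (-1) + 1)) = 0 := by
      linear_combination hz - 4 * hf
    have h5 := (mul_eq_zero.1 h4).resolve_left (by norm_num)
    exact dy_odd_ne f (-1) (by linear_combination h5)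

theorem dy_two_cube (q : ℚ_[2]) : q ^ 3 ≠ 2 := by
  intro h
  have hq : ‖q‖ < 1 := by
    by_contra hlt
    push Not at hlt
    have h1 : ‖q ^ 3‖ = 1 / 2 := by rw [h, dy_norm_two]
    rw [norm_pow] at h1
    have := one_le_pow₀ hlt (n := 3)
    linarith
  obtain ⟨z, rfl⟩ := dy_lt_one hq
  have h1 : ((2 * (2 * z ^ 3) : ℤ_[2]) : ℚ_[2]) = ((2 * 0 + 1 : ℤ_[2]) : ℚ_[2]) := by
    simp only [PadicInt.coe_mul, PadicInt.coe_pow, PadicInt.coe_add, dy_coe_two, PadicInt.coe_one,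
      PadicInt.coe_zero]
    linear_combination h / 2
  exact dy_odd_ne _ _ (Subtype.ext h1)

/-- Common scaling of three 2-adic numbers. -/
theorem dy_scale (a b c : ℚ_[2]) : ∃ (m : ℚ_[2]) (a0 b0 c0 : ℤ_[2]),
    a = m * a0 ∧ b = m * b0 ∧ c = m * c0 ∧ (a0 = 1 ∨ b0 = 1 ∨ c0 = 1) := by
  have key : ∀ m x : ℚ_[2], ‖x‖ ≤ ‖m‖ → ∃ z : ℤ_[2], x = m * z := by
    intro m x h
    by_cases hm : m = 0
    · subst hm
      have : x = 0 := by simpa using h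
      exact ⟨0, by simp [this]⟩
    · obtain ⟨z, hz⟩ := dy_int_of_le (q := x / m) (by
        rw [norm_div]; exact div_le_one_of_le₀ h (norm_nonneg _))
      exact ⟨z, by rw [← hz]; field_simp⟩
  have one : ∀ m : ℚ_[2], m = m * ((1 : ℤ_[2]) : ℚ_[2]) := by intro m; simp
  by_cases h1 : ‖b‖ ≤ ‖a‖ ∧ ‖c‖ ≤ ‖a‖
  · obtain ⟨y, hy⟩ := key a b h1.1
    obtain ⟨z, hz⟩ := key a c h1.2
    exact ⟨a, 1, y, z, one a, hy, hz, by simp⟩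
  by_cases h2 : ‖a‖ ≤ ‖b‖ ∧ ‖c‖ ≤ ‖b‖
  · obtain ⟨y, hy⟩ := key b a h2.1
    obtain ⟨z, hz⟩ := key b c h2.2
    exact ⟨b, y, 1, z, hy, one b, hz, by simp⟩
  have h3 : ‖a‖ ≤ ‖c‖ ∧ ‖b‖ ≤ ‖c‖ := by grind
  obtain ⟨y, hy⟩ := key c a h3.1
  obtain ⟨z, hz⟩ := key c b h3.2
  exact ⟨c, y, z, 1, hy, hz, one c, by simp⟩

theorem dy_int_sq {a b c : ℚ_[2]} {A B C : ℤ_[2]} (h1 : a ^ 2 + 4 * b * c = A)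
    (h2 : 2 * a * b + 2 * c ^ 2 = B) (h3 : b ^ 2 + 2 * a * c = C) :
    ∃ x y z : ℤ_[2], x ^ 2 + 4 * y * z = A ∧ 2 * x * y + 2 * z ^ 2 = B ∧ y ^ 2 + 2 * x * z = C := by
  obtain ⟨m, x, y, z, rfl, rfl, rfl, h⟩ := dy_scale a b c
  have h4 : (4 : ℚ_[2]) = ((4 : ℤ_[2]) : ℚ_[2]) := by norm_cast
  by_cases hm : ‖m‖ ≤ 1
  · obtain ⟨m, rfl⟩ := dy_int_of_le hm
    refine ⟨m * x, m * y, m * z, Subtype.ext ?_, Subtype.ext ?_, Subtype.ext ?_⟩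
    · rw [← h1]; simp [h4]
    · rw [← h2]; simp [dy_coe_two]
    · rw [← h3]; simp [dy_coe_two]
  · exfalso
    push Not at hm
    have hm0 : m ≠ 0 := by rintro rfl; simp at hm; linarith
    obtain ⟨r, hr⟩ := dy_lt_one (q := m⁻¹) (by rw [norm_inv]; exact inv_lt_one_of_one_lt₀ hm)
    have hmr : m * (2 * r) = 1 := by rw [← hr]; exact mul_inv_cancel₀ hm0
    have k1 : x ^ 2 + 4 * y * z = 4 * r ^ 2 * A := by
      apply Subtype.ext
      push_cast [← h1, dy_coe_two, ← h4]
      linear_combination (-(x : ℚ_[2]) ^ 2 - 4 * y * z) * (m * (2 * r) + 1) * hmr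
    have k2 : 2 * x * y + 2 * z ^ 2 = 4 * r ^ 2 * B := by
      apply Subtype.ext
      push_cast [← h2, dy_coe_two, ← h4]
      linear_combination (-2 * (x : ℚ_[2]) * y - 2 * z ^ 2) * (m * (2 * r) + 1) * hmr
    have k3 : y ^ 2 + 2 * x * z = 4 * r ^ 2 * C := by
      apply Subtype.ext
      push_cast [← h3, dy_coe_two, ← h4]
      linear_combination (-(y : ℚ_[2]) ^ 2 - 2 * x * z) * (m * (2 * r) + 1) * hmr
    have two0 : (2 : ℤ_[2]) ≠ 0 := by norm_num
    obtain ⟨x', rfl⟩ : ∃ x', x = 2 * x' := by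
      rcases dy_parity x with h | ⟨w, rfl⟩
      · exact h
      · exact (dy_odd_ne (2 * r ^ 2 * A - 2 * y * z) (2 * w ^ 2 + 2 * w)
          (by linear_combination -k1)).elim
    obtain ⟨y', rfl⟩ : ∃ y', y = 2 * y' := by
      rcases dy_parity y with h | ⟨w, rfl⟩
      · exact h
      · exact (dy_odd_ne (2 * r ^ 2 * C - 2 * x' * z) (2 * w ^ 2 + 2 * w)
          (by linear_combination -k3)).elim
    obtain ⟨z', rfl⟩ : ∃ z', z = 2 * z' := by
      rcases dy_parity z with h | ⟨w, rfl⟩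
      · exact h
      · have k4 : 2 * (2 * (r ^ 2 * B - 2 * x' * y')) = 2 * (2 * (2 * w ^ 2 + 2 * w) + 1) := by
          linear_combination -k2
        exact (dy_odd_ne _ _ (mul_left_cancel₀ two0 k4)).elim
    rcases h with h | h | h
    · exact dy_odd_ne x' 0 (by rw [h]; ring)
    · exact dy_odd_ne y' 0 (by rw [h]; ring)
    · exact dy_odd_ne z' 0 (by rw [h]; ring)

theorem dy_sq_B {a b c : ℚ_[2]} {A B C : ℤ_[2]} (h1 : a ^ 2 + 4 * b * c = A)
    (h2 : 2 * a * b + 2 * c ^ 2 = ((2 * B + 1 : ℤ_[2]) : ℚ_[2])) (h3 : b ^ 2 + 2 * a * c = C) :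
    False := by
  obtain ⟨x, y, z, k1, k2, k3⟩ := dy_int_sq h1 h2 h3
  exact dy_odd_ne (x * y + z ^ 2) B (by linear_combination k2)

theorem dy_sq_u2 {a b c : ℚ_[2]} (h1 : a ^ 2 + 4 * b * c = ((1 : ℤ_[2]) : ℚ_[2]))
    (h2 : 2 * a * b + 2 * c ^ 2 = ((0 : ℤ_[2]) : ℚ_[2]))
    (h3 : b ^ 2 + 2 * a * c = ((2 : ℤ_[2]) : ℚ_[2])) :
    False := by
  obtain ⟨x, y, z, k1, k2, k3⟩ := dy_int_sq h1 h2 h3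
  have two0 : (2 : ℤ_[2]) ≠ 0 := by norm_num
  rcases dy_parity y with ⟨y, rfl⟩ | ⟨w, rfl⟩
  · rcases dy_parity z with ⟨z, rfl⟩ | ⟨w, rfl⟩
    · have k4 : 2 * (2 * (y ^ 2 + x * z)) = 2 * (2 * 0 + 1) := by linear_combination k3
      exact dy_odd_ne _ _ (mul_left_cancel₀ two0 k4)
    · have k4 : 2 * (2 * (-x * y)) = 2 * (2 * (2 * w ^ 2 + 2 * w) + 1) := by
        linear_combination -k2
      exact dy_odd_ne _ _ (mul_left_cancel₀ two0 k4)
  · exact dy_odd_ne (1 - x * z) (2 * w ^ 2 + 2 * w) (by linear_combination -k3)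

end ArithmeticPart

section FramePart

variable {Ω : Type} [Field Ω] [Algebra ℚ_[2] Ω]

/-- The quadratic form `a + b x + c x²` with coefficients in the base field. -/
noncomputable def dyF (a b c : ℚ_[2]) (x : Ω) : Ω :=
  algebraMap ℚ_[2] Ω a + algebraMap ℚ_[2] Ω b * x + algebraMap ℚ_[2] Ω c * x ^ 2

/-- The norm form of the cubic field generated by a cube root of two. -/
noncomputable def dyN (a b c : ℚ_[2]) : ℚ_[2] := a ^ 3 + 2 * b ^ 3 + 4 * c ^ 3 - 6 * a * b * c

theorem dyF_gal (σ : Ω ≃ₐ[ℚ_[2]] Ω) (a b c : ℚ_[2]) (x : Ω) :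
    σ (dyF a b c x) = dyF a b c (σ x) := by
  simp [dyF]

theorem dyF_norm {p w : Ω} (hp : p ^ 3 = 2) (hw : w ^ 2 + w + 1 = 0) (a b c : ℚ_[2]) :
    dyF a b c p * dyF a b c (w * p) * dyF a b c (w ^ 2 * p) = algebraMap ℚ_[2] Ω (dyN a b c) := by
  simp only [dyF, dyN, map_add, map_sub, map_mul, map_pow, map_ofNat]
  generalize algebraMap ℚ_[2] Ω a = a
  generalize algebraMap ℚ_[2] Ω b = b
  generalize algebraMap ℚ_[2] Ω c = c
  have h3 : w ^ 2 = -w - 1 := by linear_combination hw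
  have h33 : w ^ 3 = 1 := by linear_combination (w - 1) * hw
  have h4 : w ^ 4 = w := by linear_combination (w) * h33
  have h5 : w ^ 5 = -w - 1 := by linear_combination (w^2) * h33 + hw
  have h6 : w ^ 6 = 1 := by linear_combination (w^3 + 1) * h33
  have p4 : p ^ 4 = 2 * p := by linear_combination p * hp
  have p5 : p ^ 5 = 2 * p ^ 2 := by linear_combination p ^ 2 * hp
  have p6 : p ^ 6 = 4 := by linear_combination (p ^ 3 + 2) * hp
  ring_nf
  simp only [h3, h33, h4, h5, h6, hp, p4, p5, p6]
  ring_nf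
  try simp only [h3, h33, h4, h5, h6, hp, p4, p5, p6]
  try ring_nf

theorem dyF_sq {p : Ω} (hp : p ^ 3 = 2) (a b c : ℚ_[2]) :
    (dyF a b c p) ^ 2 = dyF (a ^ 2 + 4 * b * c) (2 * a * b + 2 * c ^ 2) (b ^ 2 + 2 * a * c) p := by
  simp only [dyF, map_add, map_mul, map_pow, map_ofNat]
  generalize algebraMap ℚ_[2] Ω a = a
  generalize algebraMap ℚ_[2] Ω b = b
  generalize algebraMap ℚ_[2] Ω c = c
  linear_combination (2 * b * c + c ^ 2 * p) * hp

theorem dyF_inj {p w : Ω} (hp : p ^ 3 = 2) (hw : w ^ 2 + w + 1 = 0) {a b c a' b' c' : ℚ_[2]}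
    {σ : Ω ≃ₐ[ℚ_[2]] Ω} (hσp : σ p = w * p) (hσw : σ w = w)
    (h : dyF a b c p = dyF a' b' c' p) : a = a' ∧ b = b' ∧ c = c' := by
  have h2 := congrArg σ h
  rw [dyF_gal, dyF_gal, hσp] at h2
  have h3 := congrArg σ h2
  rw [dyF_gal, dyF_gal, map_mul, hσp, hσw] at h3
  have : CharZero Ω := charZero_of_injective_algebraMap (algebraMap ℚ_[2] Ω).injective
  have hp0 : p ≠ 0 := by rintro rfl; norm_num at hp
  simp only [dyF] at h h2 h3
  have h33 : w ^ 3 = 1 := by linear_combination (w - 1) * hw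
  have inj := (algebraMap ℚ_[2] Ω).injective
  refine ⟨inj ?_, inj ?_, inj ?_⟩
  all_goals
    revert h h2 h3
    generalize algebraMap ℚ_[2] Ω a = a
    generalize algebraMap ℚ_[2] Ω b = b
    generalize algebraMap ℚ_[2] Ω c = c
    generalize algebraMap ℚ_[2] Ω a' = a'
    generalize algebraMap ℚ_[2] Ω b' = b'
    generalize algebraMap ℚ_[2] Ω c' = c'
    intro h h2 h3
  · have h4 : 3 * (a - a') = 0 := by
      linear_combination h + h2 + h3 - (b - b') * p * hw - (c - c') * p ^ 2 * (hw + w * h33)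
    have := (mul_eq_zero.1 h4).resolve_left (by norm_num)
    linear_combination this
  · have h4 : 3 * p * (b - b') = 0 := by
      linear_combination h + w ^ 2 * h2 + w * h3 - (a - a') * hw - (c - c') * p ^ 2 * (hw + w * h33 + w ^ 2 * h33) -
        (b - b') * p * 2 * h33
    have := (mul_eq_zero.1 h4).resolve_left (by simp [hp0])
    linear_combination this
  · have h4 : 3 * p ^ 2 * (c - c') = 0 := by
      linear_combination h + w * h2 + w ^ 2 * h3 - (a - a') * hw - (c - c') * p ^ 2 * (h33 + (w ^ 3 + 1) * h33) -
        (b - b') * p * (hw + w * h33)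
    have := (mul_eq_zero.1 h4).resolve_left (by simp [hp0])
    linear_combination this

theorem dy_conj3 [Normal ℚ_[2] Ω] {x y : Ω} (hx : x ^ 3 = 2) (hy : y ^ 3 = 2) :
    ∃ σ : Ω ≃ₐ[ℚ_[2]] Ω, σ x = y := by
  have irr := X_pow_sub_C_irreducible_of_prime Nat.prime_three dy_two_cube
  have hm : ∀ z : Ω, z ^ 3 = 2 → minpoly ℚ_[2] z = Polynomial.X ^ 3 - Polynomial.C 2 := by
    intro z hz
    refine (minpoly.eq_of_irreducible_of_monic irr ?_ ?_).symm
    · simp only [map_sub, map_pow, Polynomial.aeval_X, hz, map_ofNat, sub_self]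
    · exact Polynomial.monic_X_pow_sub_C _ (by norm_num)
  exact IsConjRoot.exists_algEquiv (by rw [isConjRoot_def, hm x hx, hm y hy])

/-- The cube root of two `p`, the cube root of unity `w` and two automorphisms. -/
structure DyFrame (p w : Ω) (c t : Ω ≃ₐ[ℚ_[2]] Ω) : Prop where
  hp : p ^ 3 = 2
  hw : w ^ 2 + w + 1 = 0
  cp : c p = w * p
  cw : c w = w
  tp : t p = p
  tw : t w = w ^ 2

namespace DyFrame
variable {p w : Ω} {c t : Ω ≃ₐ[ℚ_[2]] Ω}

theorem w3 (h : DyFrame p w c t) : w ^ 3 = 1 := by linear_combination (w - 1) * h.hw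

theorem char0 (_h : DyFrame p w c t) : CharZero Ω :=
  charZero_of_injective_algebraMap (algebraMap ℚ_[2] Ω).injective

theorem p0 (h : DyFrame p w c t) : p ≠ 0 := by
  have := h.char0
  rintro rfl
  have := h.hp
  norm_num at this

theorem w0 (h : DyFrame p w c t) : w ≠ 0 := by
  rintro rfl
  have := h.hw
  norm_num at this

theorem w1 (h : DyFrame p w c t) : w ≠ 1 := by
  have := h.char0
  rintro rfl
  have := h.hw
  norm_num at this

/-- every automorphism moves `w` to itself or its square -/
theorem galw (h : DyFrame p w c t) (σ : Ω ≃ₐ[ℚ_[2]] Ω) : σ w = w ∨ σ w = w ^ 2 := by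
  have h1 := congrArg σ h.hw
  simp only [map_add, map_pow, map_one, map_zero] at h1
  have h2 : (σ w - w) * (σ w - w ^ 2) = 0 := by
    linear_combination h1 - (σ w) * h.hw  + h.w3
  rcases mul_eq_zero.1 h2 with h2 | h2
  · left; linear_combination h2
  · right; linear_combination h2

theorem cube (h : DyFrame p w c t) {x : Ω} (hx : x ^ 3 = 2) : x = p ∨ x = w * p ∨ x = w ^ 2 * p := by
  have h2 : (x - p) * ((x - w * p) * (x - w ^ 2 * p)) = 0 := by
    linear_combination hx - h.hp - p * x * (x - p) * h.hw + (p ^ 2 * (x - p)) * h.w3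
  rcases mul_eq_zero.1 h2 with h2 | h2
  · left; linear_combination h2
  rcases mul_eq_zero.1 h2 with h2 | h2
  · right; left; linear_combination h2
  · right; right; linear_combination h2

theorem galp (h : DyFrame p w c t) (σ : Ω ≃ₐ[ℚ_[2]] Ω) :
    σ p = p ∨ σ p = w * p ∨ σ p = w ^ 2 * p := by
  apply h.cube
  rw [← map_pow, h.hp, map_ofNat]

theorem ccp (h : DyFrame p w c t) : c (c p) = w ^ 2 * p := by
  rw [h.cp, map_mul, h.cw, h.cp]; ring

theorem cccp (h : DyFrame p w c t) : c (c (c p)) = p := by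
  rw [h.ccp, map_mul, map_pow, h.cw, h.cp]; linear_combination p * h.w3

theorem inj (h : DyFrame p w c t) {a b e a' b' e' : ℚ_[2]}
    (he : dyF a b e p = dyF a' b' e' p) : a = a' ∧ b = b' ∧ e = e' :=
  dyF_inj h.hp h.hw h.cp h.cw he

end DyFrame

theorem dy_w_notin {w : Ω} (hw : w ^ 2 + w + 1 = 0) (q : ℚ_[2]) : algebraMap ℚ_[2] Ω q ≠ w := by
  rintro rfl
  refine dy_neg_three (2 * q + 1) ((algebraMap ℚ_[2] Ω).injective ?_)
  simp only [map_add, map_pow, map_mul, map_one, map_neg, map_ofNat]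
  linear_combination 4 * hw

theorem dy_frame [IsAlgClosed Ω] [IsGalois ℚ_[2] Ω] :
    ∃ (p w : Ω) (c t : Ω ≃ₐ[ℚ_[2]] Ω), DyFrame p w c t := by
  obtain ⟨w, hw⟩ := dy_omega (Ω := Ω)
  obtain ⟨p, hp⟩ := IsAlgClosed.exists_pow_nat_eq (2 : Ω) (n := 3) (by norm_num)
  have h3 : w ^ 3 = 1 := by linear_combination (w - 1) * hw
  have galw : ∀ σ : Ω ≃ₐ[ℚ_[2]] Ω, σ w = w ∨ σ w = w ^ 2 := by
    intro σ
    have h1 := congrArg σ hw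
    simp only [map_add, map_pow, map_one, map_zero] at h1
    have h2 : (σ w - w) * (σ w - w ^ 2) = 0 := by
      linear_combination h1 - (σ w) * hw + h3
    rcases mul_eq_zero.1 h2 with h2 | h2
    · left; linear_combination h2
    · right; linear_combination h2
  have w4 : w ^ 4 = w := by linear_combination w * h3
  obtain ⟨s, hs⟩ : ∃ s : Ω ≃ₐ[ℚ_[2]] Ω, s w = w ^ 2 := by
    by_contra hne
    push Not at hne
    obtain ⟨q, hq⟩ := dy_fix (k := ℚ_[2]) (x := w) (fun σ => (galw σ).resolve_right (hne σ))
    exact dy_w_notin hw q hq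
  obtain ⟨c, cp, cw⟩ : ∃ c : Ω ≃ₐ[ℚ_[2]] Ω, c p = w * p ∧ c w = w := by
    obtain ⟨c0, h0⟩ := dy_conj3 (y := w * p) hp (by rw [mul_pow, hp, h3, one_mul])
    obtain ⟨c1, h1⟩ := dy_conj3 (y := w ^ 2 * p) hp
      (by linear_combination (w ^ 6) * hp + 2 * (w ^ 3 + 1) * h3)
    rcases galw c0 with k0 | k0
    · exact ⟨c0, h0, k0⟩
    rcases galw c1 with k1 | k1
    · refine ⟨c1 * c1, ?_, ?_⟩
      · simp only [AlgEquiv.mul_apply, h1, map_mul, map_pow, k1]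
        linear_combination w * p * h3
      · simp [k1]
    · refine ⟨c1 * c0, ?_, ?_⟩
      · simp only [AlgEquiv.mul_apply, h1, map_mul, k1, h0]
        linear_combination w * p * h3
      · simp only [AlgEquiv.mul_apply, map_pow, k1, k0]
        linear_combination w * h3
  have hsp : s p = p ∨ s p = w * p ∨ s p = w ^ 2 * p := by
    have hx : (s p) ^ 3 = 2 := by rw [← map_pow, hp, map_ofNat]
    generalize s p = x at hx
    have h2 : (x - p) * ((x - w * p) * (x - w ^ 2 * p)) = 0 := by
      linear_combination hx - hp - p * x * (x - p) * hw + (p ^ 2 * (x - p)) * h3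
    rcases mul_eq_zero.1 h2 with h2 | h2
    · left; linear_combination h2
    rcases mul_eq_zero.1 h2 with h2 | h2
    · right; left; linear_combination h2
    · right; right; linear_combination h2
  obtain ⟨t, tp, tw⟩ : ∃ t : Ω ≃ₐ[ℚ_[2]] Ω, t p = p ∧ t w = w ^ 2 := by
    rcases hsp with h | h | h
    · exact ⟨s, h, hs⟩
    · refine ⟨c * (c * s), ?_, ?_⟩
      · simp only [AlgEquiv.mul_apply, h, map_mul, cw, cp]
        linear_combination p * h3
      · simp [hs, cw]
    · refine ⟨c * s, ?_, ?_⟩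
      · simp only [AlgEquiv.mul_apply, h, map_mul, map_pow, cw, cp]
        linear_combination p * h3
      · simp [hs, cw]
  exact ⟨p, w, c, t, hp, hw, cp, cw, tp, tw⟩

end FramePart

section UnitPart
set_option linter.unusedSectionVars false
set_option linter.unusedVariables false

variable {Ω : Type} [Field Ω] [Algebra ℚ_[2] Ω]

/-- Being fixed by every automorphism that fixes `p`. -/
def DyL (p x : Ω) : Prop := ∀ σ : Ω ≃ₐ[ℚ_[2]] Ω, σ p = p → σ x = x

theorem DyL.mul {p x y : Ω} (hx : DyL p x) (hy : DyL p y) : DyL p (x * y) := by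
  intro σ h; rw [map_mul, hx σ h, hy σ h]

theorem DyL.inv {p x : Ω} (hx : DyL p x) : DyL p x⁻¹ := by
  intro σ h; rw [map_inv₀, hx σ h]

theorem DyL.pow {p x : Ω} (hx : DyL p x) (n : ℕ) : DyL p (x ^ n) := by
  intro σ h; rw [map_pow, hx σ h]

theorem DyL.F {p : Ω} (a b c : ℚ_[2]) : DyL p (dyF a b c p) := by
  intro σ h; rw [dyF_gal, h]

theorem DyL.base {p : Ω} (a : ℚ_[2]) : DyL p (algebraMap ℚ_[2] Ω a) := by
  intro σ h; exact σ.commutes a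

theorem DyL.self {p : Ω} : DyL p p := by
  intro σ h; exact h

theorem DyL.exists_F [IsGalois ℚ_[2] Ω] {p x : Ω} (hx : DyL p x) (hp : p ^ 3 = 2) :
    ∃ a b c : ℚ_[2], x = dyF a b c p := dy_fixL hp hx

section Lower
variable [IsGalois ℚ_[2] Ω] {p w : Ω} {c t : Ω ≃ₐ[ℚ_[2]] Ω}

theorem dy_lower (h : DyFrame p w c t) {A B C : ℚ_[2]} {s : Ω} (hs : DyL p s)
    (he : s ^ 2 = dyF A B C p) : ∃ a b c : ℚ_[2], a ^ 2 + 4 * b * c = A ∧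
      2 * a * b + 2 * c ^ 2 = B ∧ b ^ 2 + 2 * a * c = C := by
  obtain ⟨a, b, e, rfl⟩ := hs.exists_F h.hp
  rw [dyF_sq h.hp] at he
  exact ⟨a, b, e, h.inj he⟩

theorem dy_lower1 (h : DyFrame p w c t) {s : Ω} (hs : DyL p s) : s ^ 2 ≠ dyF 3 3 0 p := by
  intro he
  obtain ⟨a, b, e, h1, h2, h3⟩ := dy_lower h hs he
  refine dy_sq_B (A := 3) (B := 1) (C := 0) (h1.trans ?_) (h2.trans ?_) (h3.trans ?_)
  · norm_cast
  · norm_num [dy_coe_two]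
    norm_cast
  · norm_cast

theorem dy_lower2 (h : DyFrame p w c t) {s : Ω} (hs : DyL p s) : s ^ 2 ≠ dyF 1 0 2 p := by
  intro he
  obtain ⟨a, b, e, h1, h2, h3⟩ := dy_lower h hs he
  refine dy_sq_u2 (h1.trans ?_) (h2.trans ?_) (h3.trans ?_)
  · norm_cast
  · norm_cast
  · norm_cast

theorem dy_lower3 (h : DyFrame p w c t) {s : Ω} (hs : DyL p s) : s ^ 2 ≠ dyF 15 3 6 p := by
  intro he
  obtain ⟨a, b, e, h1, h2, h3⟩ := dy_lower h hs he
  refine dy_sq_B (A := 15) (B := 1) (C := 6) (h1.trans ?_) (h2.trans ?_) (h3.trans ?_)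
  · norm_cast
  · norm_num [dy_coe_two]
    norm_cast
  · norm_cast

end Lower

/-- Classes generated by the base field, squares, and two units. -/
def DyR (p x : Ω) : Prop := ∃ (q : ℚ_[2]) (s : Ω) (i j : ℕ), q ≠ 0 ∧ s ≠ 0 ∧ DyL p s ∧
  x = algebraMap ℚ_[2] Ω q * s ^ 2 * (1 + p) ^ i * (1 + 2 * p ^ 2) ^ j

theorem DyR.mul {p x y : Ω} (hx : DyR p x) (hy : DyR p y) : DyR p (x * y) := by
  obtain ⟨q, s, i, j, hq, hs, hL, rfl⟩ := hx
  obtain ⟨q', s', i', j', hq', hs', hL', rfl⟩ := hy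
  exact ⟨q * q', s * s', i + i', j + j', mul_ne_zero hq hq', mul_ne_zero hs hs', hL.mul hL',
    by rw [map_mul]; ring⟩

theorem DyR.base {p : Ω} {q : ℚ_[2]} (hq : q ≠ 0) : DyR p (algebraMap ℚ_[2] Ω q) :=
  ⟨q, 1, 0, 0, hq, one_ne_zero, by intro σ _; simp, by ring⟩

theorem DyR.sq {p s : Ω} (hs : s ≠ 0) (hL : DyL p s) : DyR p (s ^ 2) :=
  ⟨1, s, 0, 0, one_ne_zero, hs, hL, by rw [map_one]; ring⟩

theorem DyR.u {p : Ω} : DyR p (1 + p) :=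
  ⟨1, 1, 1, 0, one_ne_zero, one_ne_zero, by intro σ _; simp, by rw [map_one]; ring⟩

theorem DyR.u' {p : Ω} : DyR p (1 + 2 * p ^ 2) :=
  ⟨1, 1, 0, 1, one_ne_zero, one_ne_zero, by intro σ _; simp, by rw [map_one]; ring⟩

theorem DyR.of_mul {p x y : Ω} (hy : DyR p y) (hy0 : y ≠ 0) (h : DyR p (y * x)) : DyR p x := by
  have hL : DyL p y := by
    obtain ⟨q, s, i, j, hq, hs, hL, rfl⟩ := hy
    intro σ hσ
    simp only [map_mul, map_pow, map_add, map_one, map_ofNat, AlgEquiv.commutes, hσ, hL σ hσ]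
  have := (h.mul hy).mul (DyR.sq (inv_ne_zero hy0) hL.inv)
  convert this using 1
  field_simp

section Upper
variable [IsAlgClosed Ω] [IsGalois ℚ_[2] Ω] {p w : Ω} {c t : Ω ≃ₐ[ℚ_[2]] Ω}

theorem dy_upper0 (h : DyFrame p w c t) {v : Ω → ℝ} (hv : DyVal v) (a b e : ℤ_[2]) :
    DyR p (dyF ((2 * a + 1 : ℤ_[2]) : ℚ_[2]) ((4 * b : ℤ_[2]) : ℚ_[2]) ((4 * e : ℤ_[2]) : ℚ_[2]) p) := by
  obtain ⟨y, hy⟩ := (dy_odd_isUnit a).exists_right_inv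
  have hy' : ((2 * a + 1 : ℤ_[2]) : ℚ_[2]) * (y : ℚ_[2]) = 1 := by
    rw [← PadicInt.coe_mul, hy, PadicInt.coe_one]
  have hne : ((2 * a + 1 : ℤ_[2]) : ℚ_[2]) ≠ 0 := left_ne_zero_of_mul_eq_one hy'
  have four : ((4 : ℤ_[2]) : ℚ_[2]) = 4 := by norm_cast
  have hvp : v p < 1 := by
    have h1 := hv.pow p 3
    rw [h.hp, hv.two] at h1
    by_contra hlt
    push Not at hlt
    have := one_le_pow₀ hlt (n := 3)
    linarith
  set z : Ω := algebraMap ℚ_[2] Ω (b * y : ℤ_[2]) * p + algebraMap ℚ_[2] Ω (e * y : ℤ_[2]) * p ^ 2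
    with hz
  have key : dyF ((2 * a + 1 : ℤ_[2]) : ℚ_[2]) ((4 * b : ℤ_[2]) : ℚ_[2]) ((4 * e : ℤ_[2]) : ℚ_[2]) p
      = algebraMap ℚ_[2] Ω ((2 * a + 1 : ℤ_[2]) : ℚ_[2]) * (1 + 4 * z) := by
    have hy2 := congrArg (algebraMap ℚ_[2] Ω) hy'
    rw [hz, dyF]
    simp only [PadicInt.coe_mul, four, map_mul, map_ofNat, map_one] at hy2 ⊢
    linear_combination (-4 * p * algebraMap ℚ_[2] Ω b - 4 * p ^ 2 * algebraMap ℚ_[2] Ω e) * hy2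
  have hvz : v z < 1 := by
    apply hv.add_lt
    · rw [mul_comm]; exact hv.mul_lt_one hvp (hv.int_mem _)
    · rw [mul_comm]; exact hv.mul_lt_one (by rw [hv.pow]; exact pow_lt_one₀ (hv.nonneg _) hvp (by norm_num)) (hv.int_mem _)
  obtain ⟨r, hr, hr'⟩ := dy_sqrt hv (u := 1 + 4 * z) (by
    have : (1 : Ω) - (1 + 4 * z) = -(2 * (2 * z)) := by ring
    rw [this, hv.neg, hv.mul, hv.mul, hv.two]
    linarith)
  have hr0 : r ≠ 0 := by
    rintro rfl
    have h1 : (2 : Ω) * (2 * z) = -1 := by linear_combination -hr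
    have h2 := congrArg v h1
    rw [hv.neg, hv.one, hv.mul, hv.mul, hv.two] at h2
    linarith
  rw [key, ← hr]
  refine (DyR.base hne).mul (DyR.sq hr0 ?_)
  intro σ hσ
  apply hr'
  simp only [hz, map_mul, map_pow, map_add, map_one, map_ofNat, AlgEquiv.commutes, hσ]

/-- The embedding of the 2-adic integers. -/
noncomputable def dyφ (Ω : Type) [Field Ω] [Algebra ℚ_[2] Ω] : ℤ_[2] →+* Ω :=
  (algebraMap ℚ_[2] Ω).comp PadicInt.Coe.ringHom

theorem dyφ_apply (z : ℤ_[2]) : dyφ Ω z = algebraMap ℚ_[2] Ω (z : ℚ_[2]) := rfl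

theorem dy_upper0' (h : DyFrame p w c t) {v : Ω → ℝ} (hv : DyVal v) (a b e : ℤ_[2]) :
    DyR p (dyφ Ω (2 * a + 1) + dyφ Ω (4 * b) * p + dyφ Ω (4 * e) * p ^ 2) :=
  dy_upper0 h hv a b e

theorem dy_upper1 (h : DyFrame p w c t) {v : Ω → ℝ} (hv : DyVal v) (a b e : ℤ_[2]) :
    DyR p (dyφ Ω (2 * a + 1) + dyφ Ω (4 * b) * p + dyφ Ω (2 * e) * p ^ 2) := by
  rcases dy_parity e with ⟨e, rfl⟩ | ⟨e, rfl⟩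
  · convert dy_upper0' h hv a b e using 4
    ring
  · have := h.char0
    refine DyR.of_mul DyR.u' ?_ ?_
    · intro h0
      have h1 : (33 : Ω) = 0 := by
        have h2 : (2 * p ^ 2) ^ 3 = (-1 : Ω) := by
          rw [show (2 * p ^ 2) = -1 by linear_combination h0]; ring
        linear_combination h2 - 8 * (p ^ 3 + 2) * h.hp
      norm_num at h1
    · convert dy_upper0' h hv (a + 8 * b) (b + 2 * (2 * e + 1)) (a + e + 1) using 1
      simp only [map_add, map_mul, map_ofNat, map_one]
      linear_combination (8 * dyφ Ω b + 4 * (2 * dyφ Ω e + 1) * p) * h.hp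

theorem dy_upper2 (h : DyFrame p w c t) {v : Ω → ℝ} (hv : DyVal v) (a b e : ℤ_[2]) :
    DyR p (dyφ Ω (2 * a + 1) + dyφ Ω (2 * b) * p + dyφ Ω (2 * e) * p ^ 2) := by
  rcases dy_parity b with ⟨b, rfl⟩ | ⟨b, rfl⟩
  · convert dy_upper1 h hv a b e using 5
    ring
  · have := h.char0
    have hne : 1 + p ^ 2 ≠ 0 := by
      intro h0
      have h1 : (5 : Ω) = 0 := by
        have h2 : (p ^ 2) ^ 3 = (-1 : Ω) := by
          rw [show (p ^ 2) = -1 by linear_combination h0]; ring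
        linear_combination h2 - (p ^ 3 + 2) * h.hp
      norm_num at h1
    refine DyR.of_mul (DyR.sq (s := 1 + p ^ 2) hne ?_) (pow_ne_zero 2 hne) ?_
    · intro σ hσ
      rw [map_add, map_pow, hσ, map_one]
    · convert dy_upper1 h hv (a + 4 * (2 * b + 1) + 4 * e) (a + b + 1 + 2 * e)
        (2 * a + 1 + 2 * (2 * b + 1) + e) using 1
      simp only [map_add, map_mul, map_ofNat, map_one]
      generalize dyφ Ω a = a
      generalize dyφ Ω b = b
      generalize dyφ Ω e = e
      linear_combination ((2 * a + 1) * p + 4 * (2 * b + 1) + 2 * (2 * b + 1) * p ^ 2 + 4 * e * p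
        + 2 * e * (p ^ 3 + 2)) * h.hp

theorem dy_one_add_p (h : DyFrame p w c t) : 1 + p ≠ 0 := by
  have := h.char0
  intro h0
  have h1 : (3 : Ω) = 0 := by
    have h2 : p ^ 3 = (-1 : Ω) := by
      rw [show p = -1 by linear_combination h0]; ring
    linear_combination h2 - h.hp
  norm_num at h1

theorem dy_upper3 (h : DyFrame p w c t) {v : Ω → ℝ} (hv : DyVal v) (a b e : ℤ_[2]) :
    DyR p (dyφ Ω (2 * a + 1) + dyφ Ω (2 * b) * p + dyφ Ω e * p ^ 2) := by
  rcases dy_parity e with ⟨e, rfl⟩ | ⟨e, rfl⟩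
  · exact dy_upper2 h hv a b e
  · have hne := dy_one_add_p h
    refine DyR.of_mul (DyR.sq (s := 1 + p) hne ?_) (pow_ne_zero 2 hne) ?_
    · intro σ hσ
      rw [map_add, hσ, map_one]
    · convert dy_upper2 h hv (a + 2 * b + 2 * (2 * e + 1)) (2 * a + 1 + b + 2 * e + 1)
        (a + e + 1 + 2 * b) using 1
      simp only [map_add, map_mul, map_ofNat, map_one]
      generalize dyφ Ω a = a
      generalize dyφ Ω b = b
      generalize dyφ Ω e = e
      linear_combination (2 * b + (2 * e + 1) * (p + 2)) * h.hp

theorem dy_upper4 (h : DyFrame p w c t) {v : Ω → ℝ} (hv : DyVal v) (a b e : ℤ_[2]) :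
    DyR p (dyφ Ω (2 * a + 1) + dyφ Ω b * p + dyφ Ω e * p ^ 2) := by
  rcases dy_parity b with ⟨b, rfl⟩ | ⟨b, rfl⟩
  · exact dy_upper3 h hv a b e
  · refine DyR.of_mul DyR.u (dy_one_add_p h) ?_
    convert dy_upper3 h hv (a + e) (a + b + 1) (2 * b + 1 + e) using 1
    simp only [map_add, map_mul, map_ofNat, map_one]
    linear_combination (dyφ Ω e) * h.hp

theorem dy_Rp (h : DyFrame p w c t) : DyR p p := by
  refine ⟨2, p⁻¹, 0, 0, by norm_num, inv_ne_zero h.p0, DyL.self.inv, ?_⟩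
  have := h.p0
  rw [map_ofNat]
  field_simp
  exact h.hp

theorem dy_upper5 (h : DyFrame p w c t) {v : Ω → ℝ} (hv : DyVal v) (a b e : ℤ_[2])
    (h1 : a = 1 ∨ b = 1 ∨ e = 1) :
    DyR p (dyφ Ω a + dyφ Ω b * p + dyφ Ω e * p ^ 2) := by
  have hp := h.hp
  rcases dy_parity a with ⟨a, rfl⟩ | ⟨a, rfl⟩
  · rcases dy_parity b with ⟨b, rfl⟩ | ⟨b, rfl⟩
    · have he : e = 2 * 0 + 1 := by
        rcases h1 with h1 | h1 | h1
        · exact (dy_odd_ne a 0 (by rw [h1]; ring)).elim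
        · exact (dy_odd_ne b 0 (by rw [h1]; ring)).elim
        · rw [h1]; ring
      rw [he]
      have := ((dy_Rp h).mul (dy_Rp h)).mul (dy_upper4 h hv 0 a b)
      convert this using 1
      simp only [map_add, map_mul, map_ofNat, map_one]
      linear_combination (-dyφ Ω a - dyφ Ω b * p) * hp
    · have := (dy_Rp h).mul (dy_upper4 h hv b e a)
      convert this using 1
      simp only [map_add, map_mul, map_ofNat, map_one]
      linear_combination (-dyφ Ω a) * hp
  · exact dy_upper4 h hv a b e

theorem dyF_R (h : DyFrame p w c t) {v : Ω → ℝ} (hv : DyVal v) (a b e : ℚ_[2])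
    (hne : dyF a b e p ≠ 0) : DyR p (dyF a b e p) := by
  obtain ⟨m, a, b, e, rfl, rfl, rfl, h1⟩ := dy_scale a b e
  have hF : dyF (m * a) (m * b) (m * e) p = algebraMap ℚ_[2] Ω m *
      (dyφ Ω a + dyφ Ω b * p + dyφ Ω e * p ^ 2) := by
    simp only [dyF, map_mul, dyφ_apply]; ring
  have hm : m ≠ 0 := by
    rintro rfl
    rw [hF, map_zero, zero_mul] at hne
    exact hne rfl
  rw [hF]
  exact (DyR.base hm).mul (dy_upper5 h hv a b e h1)

theorem dy_rho (h : DyFrame p w c t) {v : Ω → ℝ} (hv : DyVal v) : ∃ ρ : ℚ_[2], ρ ^ 2 = 33 := by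
  obtain ⟨r, hr, hr'⟩ := dy_sqrt hv (u := 33) (by
    have : (1 : Ω) - 33 = -(2 ^ 5) := by norm_num
    rw [this, hv.neg, hv.pow, hv.two]
    norm_num)
  obtain ⟨q, hq⟩ := dy_fix (k := ℚ_[2]) (x := r) (fun σ => hr' σ (map_ofNat σ 33))
  refine ⟨q, (algebraMap ℚ_[2] Ω).injective ?_⟩
  rw [map_pow, hq, hr, map_ofNat]

/-- Every element of square norm lies in the group generated by two explicit units and squares. -/
theorem dy_upper (h : DyFrame p w c t) {v : Ω → ℝ} (hv : DyVal v) (a b e n : ℚ_[2])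
    (hn : n ≠ 0) (hN : dyN a b e = n ^ 2) : ∃ (s : Ω) (i j : ℕ), s ≠ 0 ∧ DyL p s ∧
      dyF a b e p = s ^ 2 * (dyF 3 3 0 p) ^ i * (dyF 1 0 2 p) ^ j := by
  have hw := h.hw
  have hp := h.hp
  have inj := (algebraMap ℚ_[2] Ω).injective
  have hnorm := dyF_norm hp hw a b e
  have hne : dyF a b e p ≠ 0 := by
    intro h0
    rw [h0, zero_mul, zero_mul, hN] at hnorm
    exact hn (pow_eq_zero_iff two_ne_zero |>.1 (inj (by rw [← hnorm, map_zero])))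
  obtain ⟨ρ, hρ⟩ := dy_rho h hv
  obtain ⟨q, s, i, j, hq, hs, hL, he⟩ := dyF_R h hv a b e hne
  have u1 : (3 : Ω) * (1 + p) = dyF 3 3 0 p := by
    simp only [dyF, map_ofNat, map_zero]; ring
  have u2 : 1 + 2 * p ^ 2 = dyF 1 0 2 p := by
    simp only [dyF, map_ofNat, map_zero, map_one]; ring
  have u1' : 1 + p = dyF 1 1 0 p := by
    simp only [dyF, map_one, map_zero]; ring
  obtain ⟨a', b', e', hs'⟩ := hL.exists_F hp
  have hN' : n ^ 2 = q ^ 3 * (dyN a' b' e') ^ 2 * 3 ^ i * 33 ^ j := by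
    rw [← hN]
    apply inj
    rw [← hnorm]
    have e1 : dyF a b e p = algebraMap ℚ_[2] Ω q * dyF a' b' e' p ^ 2 * (dyF 1 1 0 p) ^ i *
      (dyF 1 0 2 p) ^ j := by rw [he, ← hs', u1', u2]
    have e2 := congrArg c e1
    have e3 := congrArg c e2
    simp only [map_mul, map_pow, AlgEquiv.commutes, dyF_gal, h.ccp] at e2 e3
    rw [h.cp] at e2
    have n1 := dyF_norm hp hw a' b' e'
    have n2 := dyF_norm hp hw 1 1 0
    have n3 := dyF_norm hp hw 1 0 2
    have n2' : dyN 1 1 0 = 3 := by norm_num [dyN]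
    have n3' : dyN 1 0 2 = 33 := by norm_num [dyN]
    rw [n2'] at n2
    rw [n3'] at n3
    simp only [map_mul, map_pow]
    rw [e1, e2, e3, ← n1, ← n2, ← n3]
    ring
  have hS : dyN a' b' e' ≠ 0 := by
    intro h0
    rw [h0] at hN'
    simp at hN'
    exact hn hN'
  have hρ0 : ρ ≠ 0 := by rintro rfl; norm_num at hρ
  set y : ℚ_[2] := n / (q * dyN a' b' e' * ρ ^ j * 3 ^ i) with hy
  have hy0 : y ≠ 0 := by
    rw [hy]; apply div_ne_zero hn
    simp [hq, hS, hρ0]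
  have hq' : q = y ^ 2 * 3 ^ i := by
    rw [hy]
    have : (ρ ^ j) ^ 2 = 33 ^ j := by rw [← pow_mul, mul_comm, pow_mul, hρ]
    field_simp
    rw [hN', ← this]
    ring
  refine ⟨algebraMap ℚ_[2] Ω y * s, i, j, mul_ne_zero ?_ hs, (DyL.base y).mul hL, ?_⟩
  · intro h0; exact hy0 (inj (by rw [h0, map_zero]))
  · rw [he, hq', ← u1, ← u2, map_mul, map_pow, map_pow, map_ofNat, mul_pow (3 : Ω)]
    ring

/-- Reduction of exponents modulo two. -/
theorem dy_upper_cases (h : DyFrame p w c t) {v : Ω → ℝ} (hv : DyVal v) (a b e n : ℚ_[2])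
    (hn : n ≠ 0) (hN : dyN a b e = n ^ 2) : ∃ s : Ω, s ≠ 0 ∧ DyL p s ∧
      (dyF a b e p = s ^ 2 ∨ dyF a b e p = s ^ 2 * dyF 3 3 0 p ∨
       dyF a b e p = s ^ 2 * dyF 1 0 2 p ∨ dyF a b e p = s ^ 2 * dyF 15 3 6 p) := by
  obtain ⟨s, i, j, hs, hL, he⟩ := dy_upper h hv a b e n hn hN
  have u3 : dyF 3 3 0 p * dyF 1 0 2 p = dyF 15 3 6 p := by
    simp only [dyF, map_ofNat, map_zero, map_one]
    linear_combination 6 * h.hp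
  have hF : dyF a b e p ≠ 0 := by
    intro h0
    have hnorm := dyF_norm h.hp h.hw a b e
    rw [h0, zero_mul, zero_mul, hN] at hnorm
    exact hn (pow_eq_zero_iff two_ne_zero |>.1 ((algebraMap ℚ_[2] Ω).injective (by
      rw [← hnorm, map_zero])))
  have hLL : ∀ i' j' : ℕ, DyL p (s * (dyF 3 3 0 p) ^ i' * (dyF 1 0 2 p) ^ j') := fun i' j' =>
    (hL.mul ((DyL.F _ _ _).pow _)).mul ((DyL.F _ _ _).pow _)
  rcases Nat.even_or_odd' i with ⟨i', rfl | rfl⟩ <;> rcases Nat.even_or_odd' j with ⟨j', rfl | rfl⟩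
  · have hx : dyF a b e p = (s * (dyF 3 3 0 p) ^ i' * (dyF 1 0 2 p) ^ j') ^ 2 := by rw [he]; ring
    refine ⟨_, ?_, hLL i' j', Or.inl hx⟩
    intro h0; rw [h0] at hx; simp at hx; exact hF hx
  · have hx : dyF a b e p = (s * (dyF 3 3 0 p) ^ i' * (dyF 1 0 2 p) ^ j') ^ 2 * dyF 1 0 2 p := by
      rw [he]; ring
    refine ⟨_, ?_, hLL i' j', Or.inr (Or.inr (Or.inl hx))⟩
    intro h0; rw [h0] at hx; simp at hx; exact hF hx
  · have hx : dyF a b e p = (s * (dyF 3 3 0 p) ^ i' * (dyF 1 0 2 p) ^ j') ^ 2 * dyF 3 3 0 p := by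
      rw [he]; ring
    refine ⟨_, ?_, hLL i' j', Or.inr (Or.inl hx)⟩
    intro h0; rw [h0] at hx; simp at hx; exact hF hx
  · have hx : dyF a b e p = (s * (dyF 3 3 0 p) ^ i' * (dyF 1 0 2 p) ^ j') ^ 2 * dyF 15 3 6 p := by
      rw [he, ← u3]; ring
    refine ⟨_, ?_, hLL i' j', Or.inr (Or.inr (Or.inr hx))⟩
    intro h0; rw [h0] at hx; simp at hx; exact hF hx

end Upper
end UnitPart

section TriPart
set_option linter.unusedSectionVars false
set_option linter.unusedVariables false

variable {Ω : Type} [Field Ω] [Algebra ℚ_[2] Ω]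

theorem dy_pm {x y : Ω} (h : x ^ 2 = y ^ 2) : x = y ∨ x = -y := sq_eq_sq_iff_eq_or_eq_neg.1 h

/-- Three conjugate square roots. -/
structure DyTri (p w g1 g2 g3 : Ω) (a b e n : ℚ_[2]) : Prop where
  s1 : g1 ^ 2 = dyF a b e p
  s2 : g2 ^ 2 = dyF a b e (w * p)
  s3 : g3 ^ 2 = dyF a b e (w ^ 2 * p)
  hn : n ≠ 0
  prod : g1 * g2 * g3 = algebraMap ℚ_[2] Ω n

section Gal
variable [IsGalois ℚ_[2] Ω] {p w : Ω} {c t : Ω ≃ₐ[ℚ_[2]] Ω}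

theorem dy_NK (h : DyFrame p w c t) {x : Ω} {m : ℚ_[2]} (hm : m ≠ 0) (hx : DyL p (x ^ 2))
    (hN : x ^ 2 * c (x ^ 2) * c (c (x ^ 2)) = algebraMap ℚ_[2] Ω (m ^ 2))
    (hK : ∀ σ : Ω ≃ₐ[ℚ_[2]] Ω, σ p = p → σ w = w → σ x = x) : DyL p x := by
  have := h.char0
  have hw := h.hw
  have q0 : (∀ σ ∈ MulAction.stabilizer (Ω ≃ₐ[ℚ_[2]] Ω) p, σ x = x ∨ σ x = -x) := by
    intro σ hσ
    apply dy_pm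
    rw [← map_pow]
    exact hx σ hσ
  have q1 : (∀ σ ∈ MulAction.stabilizer (Ω ≃ₐ[ℚ_[2]] Ω) p, σ (2 * w + 1) = 2 * w + 1 ∨ σ (2 * w + 1) = -(2 * w + 1)) := by
    intro σ hσ
    rcases h.galw σ with h1 | h1
    · left; simp only [map_add, map_mul, map_ofNat, map_one, h1]
    · right
      simp only [map_add, map_mul, map_ofNat, map_one, h1]
      linear_combination 2 * hw
  have q2 : (∀ σ ∈ MulAction.stabilizer (Ω ≃ₐ[ℚ_[2]] Ω) p, σ (2 * w + 1) = 2 * w + 1 → σ x = x) := by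
    intro σ hσ hb
    apply hK σ hσ
    simp only [map_add, map_mul, map_ofNat, map_one] at hb
    have h2 : (2 : Ω) * (σ w - w) = 0 := by linear_combination hb
    have := (mul_eq_zero.1 h2).resolve_left (by norm_num)
    linear_combination this
  rcases dy_quad _ q0 q1 q2 with h1 | h1
  · intro σ hσ
    exact h1 σ hσ
  · exfalso
    have hL : DyL p (x * (2 * w + 1)) := fun σ hσ => h1 σ hσ
    obtain ⟨a, b, e, hF⟩ := hL.exists_F h.hp
    have e1 : (dyF a b e p) ^ 2 = algebraMap ℚ_[2] Ω (-3) * x ^ 2 := by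
      rw [← hF, map_neg, map_ofNat]
      linear_combination 4 * x ^ 2 * hw
    have e2 := congrArg c e1
    have e3 := congrArg c e2
    rw [map_mul, AlgEquiv.commutes, map_pow, dyF_gal] at e2
    rw [map_pow, dyF_gal, map_mul, AlgEquiv.commutes, map_pow, map_pow, dyF_gal, h.ccp, map_mul,
      AlgEquiv.commutes] at e3
    rw [h.cp] at e2
    have hnn := dyF_norm h.hp hw a b e
    have key : (dyN a b e) ^ 2 = (-3) ^ 3 * m ^ 2 := by
      apply (algebraMap ℚ_[2] Ω).injective
      rw [map_pow, ← hnn, map_mul, ← hN, map_pow]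
      rw [mul_pow, mul_pow, e1, e2, e3]
      simp only [map_pow]
      ring
    apply dy_neg_three (dyN a b e / (3 * m))
    field_simp
    rw [key]
    ring

theorem dyF_eq {x y : Ω} (hx : x ^ 3 = 2) (hy : y ^ 3 = 2) (hne : x ≠ y) {a b e : ℚ_[2]}
    (h : dyF a b e x = dyF a b e y) : b = 0 ∧ e = 0 := by
  simp only [dyF] at h
  have hxy : x - y ≠ 0 := sub_ne_zero.2 hne
  have h1 : algebraMap ℚ_[2] Ω b + algebraMap ℚ_[2] Ω e * (x + y) = 0 := by
    apply (mul_eq_zero.1 (?_ : (x - y) * _ = 0)).resolve_left hxy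
    linear_combination h
  have h2 : x ^ 2 + x * y + y ^ 2 = 0 := by
    apply (mul_eq_zero.1 (?_ : (x - y) * _ = 0)).resolve_left hxy
    linear_combination hx - hy
  have h3 : (x + y) ^ 3 = -2 := by
    linear_combination hx - 2 * hy + 3 * y * h2
  have h4 : b ^ 3 = 2 * e ^ 3 := by
    apply (algebraMap ℚ_[2] Ω).injective
    rw [map_mul, map_pow, map_pow, map_ofNat]
    have h5 : algebraMap ℚ_[2] Ω b = - algebraMap ℚ_[2] Ω e * (x + y) := by linear_combination h1
    rw [h5]
    linear_combination - (algebraMap ℚ_[2] Ω e) ^ 3 * h3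
  by_cases he : e = 0
  · subst he
    simpa using h4
  · exact (dy_two_cube (b / e) (by field_simp; rw [h4]; ring)).elim

namespace DyTri
variable {g1 g2 g3 h1 h2 h3 : Ω} {a b e n a' b' e' n' : ℚ_[2]}

theorem n0 (T : DyTri p w g1 g2 g3 a b e n) : g1 * g2 * g3 ≠ 0 := by
  rw [T.prod]; intro h; exact T.hn ((algebraMap ℚ_[2] Ω).injective (by rw [h, map_zero]))

theorem ne1 (T : DyTri p w g1 g2 g3 a b e n) : g1 ≠ 0 :=
  left_ne_zero_of_mul (left_ne_zero_of_mul T.n0)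
theorem ne2 (T : DyTri p w g1 g2 g3 a b e n) : g2 ≠ 0 :=
  right_ne_zero_of_mul (left_ne_zero_of_mul T.n0)
theorem ne3 (T : DyTri p w g1 g2 g3 a b e n) : g3 ≠ 0 := right_ne_zero_of_mul T.n0

theorem norm (h : DyFrame p w c t) (T : DyTri p w g1 g2 g3 a b e n) : dyN a b e = n ^ 2 := by
  apply (algebraMap ℚ_[2] Ω).injective
  rw [← dyF_norm h.hp h.hw, map_pow, ← T.prod, ← T.s1, ← T.s2, ← T.s3]
  ring

theorem gal_prod (T : DyTri p w g1 g2 g3 a b e n) (σ : Ω ≃ₐ[ℚ_[2]] Ω) :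
    σ g1 * σ g2 * σ g3 = g1 * g2 * g3 := by
  rw [← map_mul, ← map_mul, T.prod, AlgEquiv.commutes]

theorem K1 (T : DyTri p w g1 g2 g3 a b e n) {σ : Ω ≃ₐ[ℚ_[2]] Ω} (hp : σ p = p) :
    σ g1 = g1 ∨ σ g1 = -g1 := by
  apply dy_pm; rw [← map_pow, T.s1, dyF_gal, hp]
theorem K2 (T : DyTri p w g1 g2 g3 a b e n) {σ : Ω ≃ₐ[ℚ_[2]] Ω} (hp : σ p = p) (hw : σ w = w) :
    σ g2 = g2 ∨ σ g2 = -g2 := by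
  apply dy_pm; rw [← map_pow, T.s2, dyF_gal, map_mul, hp, hw]
theorem K3 (T : DyTri p w g1 g2 g3 a b e n) {σ : Ω ≃ₐ[ℚ_[2]] Ω} (hp : σ p = p) (hw : σ w = w) :
    σ g3 = g3 ∨ σ g3 = -g3 := by
  apply dy_pm; rw [← map_pow, T.s3, dyF_gal, map_mul, map_pow, hp, hw]

theorem t2 (h : DyFrame p w c t) (T : DyTri p w g1 g2 g3 a b e n) : t g2 = g3 ∨ t g2 = -g3 := by
  apply dy_pm; rw [← map_pow, T.s2, dyF_gal, map_mul, h.tp, h.tw, T.s3]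
theorem t3 (h : DyFrame p w c t) (T : DyTri p w g1 g2 g3 a b e n) : t g3 = g2 ∨ t g3 = -g2 := by
  apply dy_pm
  rw [← map_pow, T.s3, dyF_gal, map_mul, map_pow, h.tp, h.tw, T.s2]
  congr 2
  linear_combination w * h.w3

theorem K_eq23 (h : DyFrame p w c t) (T : DyTri p w g1 g2 g3 a b e n) {σ : Ω ≃ₐ[ℚ_[2]] Ω}
    (hp : σ p = p) (hw : σ w = w) (h1 : σ g1 = g1) :
    (σ g2 = g2 ∧ σ g3 = g3) ∨ (σ g2 = -g2 ∧ σ g3 = -g3) := by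
  have := h.char0
  have hP := T.gal_prod σ
  have h0 := T.n0
  have bad : ¬ (-(g1 * g2 * g3) = g1 * g2 * g3) := fun hh => h0 (self_eq_neg.1 hh.symm)
  rcases T.K2 hp hw with k2 | k2 <;> rcases T.K3 hp hw with k3 | k3
  · exact Or.inl ⟨k2, k3⟩
  · rw [h1, k2, k3] at hP; exact (bad (by linear_combination hP)).elim
  · rw [h1, k2, k3] at hP; exact (bad (by linear_combination hP)).elim
  · exact Or.inr ⟨k2, k3⟩

theorem K_eq1 (h : DyFrame p w c t) (T : DyTri p w g1 g2 g3 a b e n) {σ : Ω ≃ₐ[ℚ_[2]] Ω}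
    (h23 : (σ g2 = g2 ∧ σ g3 = g3) ∨ (σ g2 = -g2 ∧ σ g3 = -g3)) : σ g1 = g1 := by
  have hP := T.gal_prod σ
  have h0 : g2 * g3 ≠ 0 := mul_ne_zero T.ne2 T.ne3
  apply mul_right_cancel₀ h0
  rcases h23 with ⟨k2, k3⟩ | ⟨k2, k3⟩
  all_goals rw [k2, k3] at hP; linear_combination hP

/-- Automorphisms in the difference test. -/
theorem diff_aux (h : DyFrame p w c t) (T : DyTri p w g1 g2 g3 a b e n)
    (T' : DyTri p w h1 h2 h3 a' b' e' n')
    (hle : ∀ σ : Ω ≃ₐ[ℚ_[2]] Ω, σ g1 = g1 → σ g2 = g2 → σ g3 = g3 → σ h3 = h3)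
    {σ : Ω ≃ₐ[ℚ_[2]] Ω} (hp : σ p = p) (hw : σ w = w) (hg : σ g1 = g1) : σ h1 = h1 := by
  have comm : ∀ y : Ω, ((σ * t)⁻¹ * (t * σ)) y = y ↔ t (σ y) = σ (t y) := by
    intro y
    rw [AlgEquiv.mul_apply]
    constructor
    · intro hy
      have := congrArg (σ * t) hy
      rw [← AlgEquiv.mul_apply, mul_inv_cancel, AlgEquiv.one_apply] at this
      exact this
    · intro hy
      have h2 : (t * σ) y = (σ * t) y := hy
      rw [h2, ← AlgEquiv.mul_apply, inv_mul_cancel, AlgEquiv.one_apply]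
  have c1 : t (σ g1) = σ (t g1) := by
    rcases T.K1 h.tp with k | k <;> simp [k, hg]
  have c23 : t (σ g2) = σ (t g2) ∧ t (σ g3) = σ (t g3) := by
    rcases T.K_eq23 h hp hw hg with ⟨k2, k3⟩ | ⟨k2, k3⟩ <;> rcases T.t2 h with l2 | l2 <;>
      rcases T.t3 h with l3 | l3 <;> simp [k2, k3, l2, l3]
  have c3 := (comm h3).1 (hle _ ((comm g1).2 c1) ((comm g2).2 c23.1) ((comm g3).2 c23.2))
  apply T'.K_eq1 h
  rcases T'.K3 hp hw with k3 | k3 <;> rcases T'.t3 h with l3 | l3 <;>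
    simp only [k3, l3, map_neg, neg_neg, neg_inj] at c3
  · left; exact ⟨c3.symm, k3⟩
  · left; exact ⟨c3.symm, k3⟩
  · right; exact ⟨c3.symm, k3⟩
  · right; exact ⟨by rw [eq_neg_iff_add_eq_zero, add_comm]; linear_combination c3, k3⟩

theorem diff (h : DyFrame p w c t) (T : DyTri p w g1 g2 g3 a b e n)
    (T' : DyTri p w h1 h2 h3 a' b' e' n')
    (hE : IntermediateField.adjoin ℚ_[2] {g1, g2, g3} =
      IntermediateField.adjoin ℚ_[2] {h1, h2, h3}) : DyL p (g1 * h1) := by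
  have m1 : ∀ σ : Ω ≃ₐ[ℚ_[2]] Ω, σ g1 = g1 → σ g2 = g2 → σ g3 = g3 → σ h3 = h3 := by
    intro σ k1 k2 k3
    refine dy_adjoin_fix {g1, g2, g3} σ (by simp [k1, k2, k3]) h3 ?_
    rw [hE]
    exact IntermediateField.subset_adjoin _ _ (by simp)
  have m2 : ∀ σ : Ω ≃ₐ[ℚ_[2]] Ω, σ h1 = h1 → σ h2 = h2 → σ h3 = h3 → σ g3 = g3 := by
    intro σ k1 k2 k3
    refine dy_adjoin_fix {h1, h2, h3} σ (by simp [k1, k2, k3]) g3 ?_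
    rw [← hE]
    exact IntermediateField.subset_adjoin _ _ (by simp)
  have hc1 : c (g1 ^ 2) = g2 ^ 2 := by rw [T.s1, dyF_gal, h.cp, T.s2]
  have hc2 : c (g2 ^ 2) = g3 ^ 2 := by
    rw [T.s2, dyF_gal, ← h.cp, h.ccp, T.s3]
  have hc1' : c (h1 ^ 2) = h2 ^ 2 := by rw [T'.s1, dyF_gal, h.cp, T'.s2]
  have hc2' : c (h2 ^ 2) = h3 ^ 2 := by
    rw [T'.s2, dyF_gal, ← h.cp, h.ccp, T'.s3]
  refine dy_NK h (m := n * n') (mul_ne_zero T.hn T'.hn) ?_ ?_ ?_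
  · rw [mul_pow, T.s1, T'.s1]; exact (DyL.F _ _ _).mul (DyL.F _ _ _)
  · rw [mul_pow, map_mul, hc1, hc1', map_mul, hc2, hc2', map_pow, map_mul, ← T.prod, ← T'.prod]
    ring
  · intro σ hp hw
    rw [map_mul]
    rcases T.K1 hp with k | k
    · rw [k, T.diff_aux h T' m1 hp hw k]
    · rcases T'.K1 hp with k' | k'
      · rw [k', T'.diff_aux h T m2 hp hw k']
      · rw [k, k']; ring

/-- The stabiliser of the generators fixes `p` and `w`. -/
theorem fix_p (h : DyFrame p w c t) (T : DyTri p w h1 h2 h3 a b e n) (hL : ¬ DyL p h1) :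
    b ≠ 0 ∨ e ≠ 0 := by
  by_contra hbe
  push Not at hbe
  obtain ⟨rfl, rfl⟩ := hbe
  apply hL
  have hN := T.norm h
  have hN' : a ^ 3 = n ^ 2 := by rw [← hN, dyN]; ring
  have ha : a ≠ 0 := by
    rintro rfl
    have := T.hn
    simp at hN'
    exact this (pow_eq_zero_iff two_ne_zero |>.1 hN'.symm)
  have h2 : h1 ^ 2 = (algebraMap ℚ_[2] Ω (n / a)) ^ 2 := by
    rw [T.s1, ← map_pow, div_pow, ← hN', dyF, map_zero]
    have : a ^ 3 / a ^ 2 = a := by field_simp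
    rw [this]; ring
  rcases dy_pm h2 with h3 | h3
  · rw [h3]; exact DyL.base _
  · rw [h3, ← map_neg]; exact DyL.base _

theorem same (h : DyFrame p w c t) (T : DyTri p w g1 g2 g3 a b e n)
    (T' : DyTri p w h1 h2 h3 a' b' e' n') (hL : ¬ DyL p h1) {s : Ω} (hs : DyL p s)
    (hg : g1 = s * h1) : IntermediateField.adjoin ℚ_[2] {g1, g2, g3} ≤
      IntermediateField.adjoin ℚ_[2] {h1, h2, h3} := by
  have hne := T'.fix_p h hL
  have w3 := h.w3
  have wp3 : (w * p) ^ 3 = 2 := by rw [mul_pow, h.hp, w3, one_mul]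
  have gal3 : ∀ (σ : Ω ≃ₐ[ℚ_[2]] Ω) (x : Ω), x ^ 3 = 2 → (σ x) ^ 3 = 2 := by
    intro σ x hx; rw [← map_pow, hx, map_ofNat]
  obtain ⟨x, y, z, rfl⟩ := hs.exists_F h.hp
  have hg2 : g2 ^ 2 = (dyF x y z (w * p) * h2) ^ 2 := by
    have h1 : c (g1 ^ 2) = c ((dyF x y z p * h1) ^ 2) := by rw [hg]
    rw [T.s1, mul_pow, T'.s1, map_mul, map_pow, dyF_gal, dyF_gal, dyF_gal, h.cp] at h1
    rw [T.s2, mul_pow, T'.s2, h1]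
  have hg3 : g3 ^ 2 = (dyF x y z (w ^ 2 * p) * h3) ^ 2 := by
    have h1 : c (c (g1 ^ 2)) = c (c ((dyF x y z p * h1) ^ 2)) := by rw [hg]
    rw [T.s1, mul_pow, T'.s1] at h1
    simp only [map_mul, map_pow, dyF_gal, h.ccp] at h1
    rw [T.s3, mul_pow, T'.s3, h1]
  apply dy_adjoin_le
  intro σ hσ
  have k1 : σ h1 = h1 := hσ h1 (by simp)
  have k2 : σ h2 = h2 := hσ h2 (by simp)
  have k3 : σ h3 = h3 := hσ h3 (by simp)
  have sp : σ p = p := by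
    by_contra hh
    have e1 : σ (h1 ^ 2) = h1 ^ 2 := by rw [map_pow, k1]
    rw [T'.s1, dyF_gal] at e1
    obtain ⟨hb, he⟩ := dyF_eq (gal3 σ p h.hp) h.hp hh e1
    rcases hne with hne | hne
    · exact hne hb
    · exact hne he
  have swp : σ (w * p) = w * p := by
    by_contra hh
    have e1 : σ (h2 ^ 2) = h2 ^ 2 := by rw [map_pow, k2]
    rw [T'.s2, dyF_gal] at e1
    obtain ⟨hb, he⟩ := dyF_eq (gal3 σ _ wp3) wp3 hh e1
    rcases hne with hne | hne
    · exact hne hb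
    · exact hne he
  have sw : σ w = w := by
    rw [map_mul, sp] at swp
    exact mul_right_cancel₀ h.p0 swp
  have q1 : σ g1 = g1 := by rw [hg, map_mul, k1, dyF_gal, sp]
  have q2 : σ g2 = g2 := by
    rcases dy_pm hg2 with hh | hh
    · rw [hh, map_mul, k2, dyF_gal, swp]
    · rw [hh, map_neg, map_mul, k2, dyF_gal, swp]
  have q3 : σ g3 = g3 := by
    rcases dy_pm hg3 with hh | hh
    · rw [hh, map_mul, k3, dyF_gal, map_mul, map_pow, sp, sw]
    · rw [hh, map_neg, map_mul, k3, dyF_gal, map_mul, map_pow, sp, sw]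
  intro y hy
  simp only [Set.mem_insert_iff, Set.mem_singleton_iff] at hy
  rcases hy with rfl | rfl | rfl
  · exact q1
  · exact q2
  · exact q3

end DyTri
end Gal
end TriPart

section BuildPart
set_option linter.unusedSectionVars false
set_option linter.unusedVariables false

variable {Ω : Type} [Field Ω] [Algebra ℚ_[2] Ω] [IsGalois ℚ_[2] Ω]
  {p w : Ω} {c t : Ω ≃ₐ[ℚ_[2]] Ω}

theorem dy_adj [CharZero Ω] (θ : Fin 4 → Ω) (hs : θ 0 + θ 1 + θ 2 + θ 3 = 0) :
    IntermediateField.adjoin ℚ_[2] (Set.range θ) =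
      IntermediateField.adjoin ℚ_[2] {θ 0 + θ 1, θ 0 + θ 2, θ 0 + θ 3} := by
  apply le_antisymm
  · apply dy_adjoin_le
    intro σ hσ
    have k1 := hσ (θ 0 + θ 1) (by simp)
    have k2 := hσ (θ 0 + θ 2) (by simp)
    have k3 := hσ (θ 0 + θ 3) (by simp)
    rw [map_add] at k1 k2 k3
    have hs' := congrArg σ hs
    simp only [map_add, map_zero] at hs'
    have h0 : (2 : Ω) * (σ (θ 0) - θ 0) = 0 := by
      linear_combination k1 + k2 + k3 - hs' + hs
    have h0' := (mul_eq_zero.1 h0).resolve_left (by norm_num)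
    rintro _ ⟨i, rfl⟩
    fin_cases i
    · show σ (θ 0) = θ 0
      linear_combination h0'
    · show σ (θ 1) = θ 1
      linear_combination k1 - h0'
    · show σ (θ 2) = θ 2
      linear_combination k2 - h0'
    · show σ (θ 3) = θ 3
      linear_combination k3 - h0'
  · apply dy_adjoin_le
    intro σ hσ
    have k : ∀ i, σ (θ i) = θ i := fun i => hσ _ ⟨i, rfl⟩
    intro y hy
    simp only [Set.mem_insert_iff, Set.mem_singleton_iff] at hy
    rcases hy with rfl | rfl | rfl <;> simp [k]

theorem dy_build_S4 (h : DyFrame p w c t) {g1 g2 g3 : Ω} {a b e n : ℚ_[2]}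
    (T : DyTri p w g1 g2 g3 a b e n) (hL : ¬ DyL p g1) (c1 : c g1 = g2) (c2 : c g2 = g3)
    (c3 : c g3 = g1) : DyS4 (IntermediateField.adjoin ℚ_[2] {g1, g2, g3}) := by
  have := h.char0
  have n1 := T.ne1
  have n2 := T.ne2
  have n3 := T.ne3
  have ci1 : c.symm g1 = g3 := by rw [← c3]; simp
  have ci2 : c.symm g2 = g1 := by rw [← c1]; simp
  have ci3 : c.symm g3 = g2 := by rw [← c2]; simp
  have ciw : c.symm w = w := by conv_lhs => rw [← h.cw]
                                simp
  have cip : c.symm p = w ^ 2 * p := by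
    rw [AlgEquiv.symm_apply_eq, map_mul, map_pow, h.cw, h.cp]
    linear_combination -p * h.w3
  have cic : ∀ x, c.symm (c x) = x := fun x => c.symm_apply_apply x
  -- the double transposition
  obtain ⟨d, dp, dw, d1, d2, d3⟩ : ∃ d : Ω ≃ₐ[ℚ_[2]] Ω, d p = p ∧ d w = w ∧ d g1 = g1 ∧
      d g2 = -g2 ∧ d g3 = -g3 := by
    by_contra hne
    push Not at hne
    apply hL
    refine dy_NK h (m := n) T.hn ?_ ?_ ?_
    · rw [T.s1]; exact DyL.F _ _ _
    · rw [map_pow, c1, map_pow, c2, map_pow, ← T.prod]; ring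
    let H : Subgroup (Ω ≃ₐ[ℚ_[2]] Ω) := MulAction.stabilizer (Ω ≃ₐ[ℚ_[2]] Ω) p ⊓
      MulAction.stabilizer (Ω ≃ₐ[ℚ_[2]] Ω) w
    have hH : ∀ σ, σ ∈ H ↔ σ p = p ∧ σ w = w := fun σ => Iff.rfl
    have q0 : ∀ σ ∈ H, σ g2 = g2 ∨ σ g2 = -g2 := fun σ hσ => T.K2 hσ.1 hσ.2
    have q1 : ∀ σ ∈ H, σ g1 = g1 ∨ σ g1 = -g1 := fun σ hσ => T.K1 hσ.1
    have q2 : ∀ σ ∈ H, σ g1 = g1 → σ g2 = g2 := by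
      intro σ hσ k1
      rcases T.K_eq23 h hσ.1 hσ.2 k1 with k | k
      · exact k.1
      · exact (hne σ hσ.1 hσ.2 k1 k.1 k.2).elim
    intro σ sp sw
    rcases dy_quad H q0 q1 q2 with k | k
    · have hm : (c * σ * c.symm) ∈ H := by
        rw [hH]
        simp only [AlgEquiv.mul_apply]
        constructor
        · rw [cip, map_mul, map_pow, sp, sw, ← cip, AlgEquiv.apply_symm_apply]
        · rw [ciw, sw, h.cw]
      have := k _ hm
      simp only [AlgEquiv.mul_apply, ci2] at this
      rw [← c1] at this
      exact c.injective this
    · have hm : (c.symm * σ * c) ∈ H := by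
        rw [hH]
        simp only [AlgEquiv.mul_apply]
        constructor
        · rw [h.cp, map_mul, sp, sw, ← h.cp, cic]
        · rw [h.cw, sw, ciw]
      have k2 := k _ hm
      have k3 := T.gal_prod (c.symm * σ * c)
      rw [map_mul] at k2
      have k4 : (c.symm * σ * c) g3 = g3 := by
        apply mul_left_cancel₀ (mul_ne_zero n2 n1)
        nth_rewrite 1 [← k2]
        linear_combination k3
      simp only [AlgEquiv.mul_apply, c3] at k4
      rw [AlgEquiv.symm_apply_eq, c3] at k4
      exact k4
  -- the transposition
  have e1 : ∀ x, (c * d * c.symm) x = c (d (c.symm x)) := fun _ => rfl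
  have e2 : ∀ x, (c.symm * d * c) x = c.symm (d (c x)) := fun _ => rfl
  obtain ⟨τ, τ1, τ2, τ3⟩ : ∃ τ : Ω ≃ₐ[ℚ_[2]] Ω, τ g1 = g1 ∧ τ g2 = g3 ∧ τ g3 = g2 := by
    have hP := T.gal_prod t
    have bad : ¬ (-(g1 * g2 * g3) = g1 * g2 * g3) := fun hh => T.n0 (self_eq_neg.1 hh.symm)
    rcases T.K1 h.tp with k1 | k1 <;> rcases T.t2 h with k2 | k2 <;> rcases T.t3 h with k3 | k3
    · exact ⟨t, k1, k2, k3⟩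
    · rw [k1, k2, k3] at hP; exact (bad (by linear_combination hP)).elim
    · rw [k1, k2, k3] at hP; exact (bad (by linear_combination hP)).elim
    · exact ⟨d * t, by simp [k1, d1], by simp [k2, d3], by simp [k3, d2]⟩
    · rw [k1, k2, k3] at hP; exact (bad (by linear_combination hP)).elim
    · exact ⟨c.symm * d * c * t, by simp [k1, d2, c1, ci2], by simp [k2, c3, d1, ci1],
        by simp [k3, c2, d3, ci3]⟩
    · exact ⟨c * d * c.symm * t, by simp [k1, d3, c3, ci1], by simp [k2, d2, c2, ci3],
        by simp [k3, d1, c1, ci2]⟩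
    · rw [k1, k2, k3] at hP; exact (bad (by linear_combination hP)).elim
  set θ : Fin 4 → Ω := ![(g1 + g2 + g3) / 2, (g1 - g2 - g3) / 2, (-g1 + g2 - g3) / 2,
    (-g1 - g2 + g3) / 2] with hθ
  have t0 : θ 0 = (g1 + g2 + g3) / 2 := rfl
  have t1 : θ 1 = (g1 - g2 - g3) / 2 := rfl
  have t2 : θ 2 = (-g1 + g2 - g3) / 2 := rfl
  have t3 : θ 3 = (-g1 - g2 + g3) / 2 := rfl
  have two : (2 : Ω) ≠ 0 := by norm_num
  have hset : IntermediateField.adjoin ℚ_[2] {g1, g2, g3} =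
      IntermediateField.adjoin ℚ_[2] (Set.range θ) := by
    rw [dy_adj θ (by rw [t0, t1, t2, t3]; ring)]
    congr 2
    · rw [t0, t1]; ring
    · congr 1
      · rw [t0, t2]; ring
      · rw [t0, t3]
        congr 1
        ring
  rw [hset]
  -- sums and differences are nonzero
  have p12 : g1 + g2 ≠ 0 := by
    intro hh
    have := congrArg d hh
    rw [map_add, d1, d2, map_zero] at this
    exact n1 ((mul_eq_zero.1 (show 2 * g1 = 0 by linear_combination hh + this)).resolve_left two)
  have m12 : g1 - g2 ≠ 0 := by
    intro hh
    have := congrArg d hh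
    rw [map_sub, d1, d2, map_zero] at this
    exact n1 ((mul_eq_zero.1 (show 2 * g1 = 0 by linear_combination hh + this)).resolve_left two)
  have p13 : g1 + g3 ≠ 0 := by
    intro hh
    have := congrArg d hh
    rw [map_add, d1, d3, map_zero] at this
    exact n1 ((mul_eq_zero.1 (show 2 * g1 = 0 by linear_combination hh + this)).resolve_left two)
  have m13 : g1 - g3 ≠ 0 := by
    intro hh
    have := congrArg d hh
    rw [map_sub, d1, d3, map_zero] at this
    exact n1 ((mul_eq_zero.1 (show 2 * g1 = 0 by linear_combination hh + this)).resolve_left two)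
  have p23 : g2 + g3 ≠ 0 := by
    intro hh
    have := congrArg c.symm hh
    rw [map_add, ci2, ci3, map_zero] at this
    exact p12 this
  have m23 : g2 - g3 ≠ 0 := by
    intro hh
    have := congrArg c.symm hh
    rw [map_sub, ci2, ci3, map_zero] at this
    exact m12 this
  have n01 : θ 0 ≠ θ 1 := fun hh => p23 (by rw [t0, t1] at hh; linear_combination hh)
  have n02 : θ 0 ≠ θ 2 := fun hh => p13 (by rw [t0, t2] at hh; linear_combination hh)
  have n03 : θ 0 ≠ θ 3 := fun hh => p12 (by rw [t0, t3] at hh; linear_combination hh)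
  have n12 : θ 1 ≠ θ 2 := fun hh => m12 (by rw [t1, t2] at hh; linear_combination hh)
  have n13 : θ 1 ≠ θ 3 := fun hh => m13 (by rw [t1, t3] at hh; linear_combination hh)
  have n23 : θ 2 ≠ θ 3 := fun hh => m23 (by rw [t2, t3] at hh; linear_combination hh)
  have E1 : g1 ^ 2 + g2 ^ 2 + g3 ^ 2 = algebraMap ℚ_[2] Ω (3 * a) := by
    rw [T.s1, T.s2, T.s3]
    simp only [dyF, map_mul, map_ofNat]
    generalize algebraMap ℚ_[2] Ω a = a
    generalize algebraMap ℚ_[2] Ω b = b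
    generalize algebraMap ℚ_[2] Ω e = e
    linear_combination b * p * h.hw + e * p ^ 2 * (h.hw + w * h.w3)
  have E2 : ∃ q : ℚ_[2], g1 ^ 2 * g2 ^ 2 + g1 ^ 2 * g3 ^ 2 + g2 ^ 2 * g3 ^ 2 =
      algebraMap ℚ_[2] Ω q := by
    refine ⟨3 * a ^ 2 - 6 * b * e, ?_⟩
    rw [T.s1, T.s2, T.s3]
    have w3 := h.w3
    have hp := h.hp
    simp only [dyF, map_mul, map_ofNat, map_sub, map_pow]
    generalize algebraMap ℚ_[2] Ω a = a
    generalize algebraMap ℚ_[2] Ω b = b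
    generalize algebraMap ℚ_[2] Ω e = e
    have w2 : w ^ 2 = -1 - w := by linear_combination h.hw
    have p3 : p ^ 4 = 2 * p := by linear_combination p * hp
    have w4 : w ^ 4 = w := by linear_combination w * w3
    have w5 : w ^ 5 = -1 - w := by linear_combination w ^ 2 * w3 + h.hw
    have w6 : w ^ 6 = 1 := by linear_combination (w ^ 3 + 1) * w3
    ring_nf
    simp only [w2, w3, w4, w5, w6, hp, p3]
    ring_nf
  obtain ⟨q, E2⟩ := E2
  have P := T.prod
  have poly : ∀ y : Ω, (y - θ 0) * ((y - θ 1) * ((y - θ 2) * (y - θ 3))) =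
      y ^ 4 - algebraMap ℚ_[2] Ω (3 * a) / 2 * y ^ 2 - algebraMap ℚ_[2] Ω n * y +
        ((algebraMap ℚ_[2] Ω (3 * a)) ^ 2 - 4 * algebraMap ℚ_[2] Ω q) / 16 := by
    intro y
    rw [← E1, ← E2, ← P, t0, t1, t2, t3]
    field_simp
    ring
  have ds : ∀ x y z : Ω, ∀ σ : Ω ≃ₐ[ℚ_[2]] Ω,
      σ ((x + y + z) / 2) = (σ x + σ y + σ z) / 2 := by
    intro x y z σ
    simp only [map_div₀, map_add, map_ofNat]
  apply dy_s4_of_tuple θ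
  · intro i j hij
    fin_cases i <;> fin_cases j <;> first
      | rfl
      | exact absurd hij n01
      | exact absurd hij n02
      | exact absurd hij n03
      | exact absurd hij n12
      | exact absurd hij n13
      | exact absurd hij n23
      | exact absurd hij.symm n01
      | exact absurd hij.symm n02
      | exact absurd hij.symm n03
      | exact absurd hij.symm n12
      | exact absurd hij.symm n13
      | exact absurd hij.symm n23
  · intro σ i
    have h0 : (θ i - θ 0) * ((θ i - θ 1) * ((θ i - θ 2) * (θ i - θ 3))) = 0 := by
      fin_cases i
      · show (θ 0 - θ 0) * _ = 0
        ring
      · show (θ 1 - θ 0) * ((θ 1 - θ 1) * ((θ 1 - θ 2) * (θ 1 - θ 3))) = 0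
        ring
      · show (θ 2 - θ 0) * ((θ 2 - θ 1) * ((θ 2 - θ 2) * (θ 2 - θ 3))) = 0
        ring
      · show (θ 3 - θ 0) * ((θ 3 - θ 1) * ((θ 3 - θ 2) * (θ 3 - θ 3))) = 0
        ring
    have h1 : (σ (θ i) - θ 0) * ((σ (θ i) - θ 1) * ((σ (θ i) - θ 2) * (σ (θ i) - θ 3))) = 0 := by
      rw [poly] at h0 ⊢
      have := congrArg σ h0
      simpa only [map_add, map_sub, map_mul, map_pow, map_div₀, map_ofNat, map_zero,
        AlgEquiv.commutes] using this
    rcases mul_eq_zero.1 h1 with h1 | h1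
    · exact ⟨0, sub_eq_zero.1 h1⟩
    rcases mul_eq_zero.1 h1 with h1 | h1
    · exact ⟨1, sub_eq_zero.1 h1⟩
    rcases mul_eq_zero.1 h1 with h1 | h1
    · exact ⟨2, sub_eq_zero.1 h1⟩
    · exact ⟨3, sub_eq_zero.1 h1⟩
  · refine ⟨d, ?_, ?_, ?_, ?_⟩
    all_goals
      simp only [t0, t1, t2, t3, map_div₀, map_add, map_sub, map_neg, map_ofNat, d1, d2, d3]
      ring
  · refine ⟨c, ?_, ?_, ?_, ?_⟩
    all_goals
      simp only [t0, t1, t2, t3, map_div₀, map_add, map_sub, map_neg, map_ofNat, c1, c2, c3]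
      ring
  · refine ⟨τ, ?_, ?_, ?_, ?_⟩
    all_goals
      simp only [t0, t1, t2, t3, map_div₀, map_add, map_sub, map_neg, map_ofNat, τ1, τ2, τ3]
      ring

theorem dy_build [IsAlgClosed Ω] (h : DyFrame p w c t) {a b e n : ℚ_[2]} (hn : n ≠ 0)
    (hN : dyN a b e = n ^ 2) (hns : ∀ s : Ω, DyL p s → s ^ 2 ≠ dyF a b e p) :
    ∃ (g1 g2 g3 : Ω) (n' : ℚ_[2]), DyTri p w g1 g2 g3 a b e n' ∧ ¬ DyL p g1 ∧
      DyS4 (IntermediateField.adjoin ℚ_[2] {g1, g2, g3}) := by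
  obtain ⟨g, hg⟩ := IsAlgClosed.exists_pow_nat_eq (dyF a b e p) (n := 2) (by norm_num)
  have s2 : (c g) ^ 2 = dyF a b e (w * p) := by rw [← map_pow, hg, dyF_gal, h.cp]
  have s3 : (c (c g)) ^ 2 = dyF a b e (w ^ 2 * p) := by
    rw [← map_pow, ← map_pow, hg, dyF_gal, dyF_gal, h.ccp]
  have hnL : ¬ DyL p g := fun hL => hns g hL hg
  have key : ∃ n' : ℚ_[2], n' ≠ 0 ∧ g * c g * c (c g) = algebraMap ℚ_[2] Ω n' := by
    have : (g * c g * c (c g)) ^ 2 = (algebraMap ℚ_[2] Ω n) ^ 2 := by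
      rw [mul_pow, mul_pow, hg, s2, s3, dyF_norm h.hp h.hw, hN, map_pow]
    rcases dy_pm this with h1 | h1
    · exact ⟨n, hn, h1⟩
    · exact ⟨-n, neg_ne_zero.2 hn, by rw [h1, map_neg]⟩
  obtain ⟨n', hn', hP⟩ := key
  have T : DyTri p w g (c g) (c (c g)) a b e n' := ⟨hg, s2, s3, hn', hP⟩
  refine ⟨g, c g, c (c g), n', T, hnL, dy_build_S4 h T hnL rfl rfl ?_⟩
  have := T.gal_prod c
  apply mul_left_cancel₀ (mul_ne_zero T.ne2 T.ne3)
  linear_combination this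

end BuildPart

section FinalPart
set_option linter.unusedSectionVars false
set_option linter.unusedVariables false

variable {Ω : Type} [Field Ω] [Algebra ℚ_[2] Ω] [IsGalois ℚ_[2] Ω] [IsAlgClosed Ω]
  {p w : Ω} {c t : Ω ≃ₐ[ℚ_[2]] Ω}

/-- Symmetric sums of the roots lie in the base field. -/
theorem dy_sym {θ : Fin 4 → Ω} (hσ : ∀ σ : Ω ≃ₐ[ℚ_[2]] Ω, ∃ π : Equiv.Perm (Fin 4),
    ∀ i, σ (θ i) = θ (π i)) (m : ℕ) :
    ∃ q : ℚ_[2], algebraMap ℚ_[2] Ω q = θ 0 ^ m + θ 1 ^ m + θ 2 ^ m + θ 3 ^ m := by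
  have : ∃ q : ℚ_[2], algebraMap ℚ_[2] Ω q = ∑ i, θ i ^ m := by
    apply dy_fix
    intro σ
    obtain ⟨π, hπ⟩ := hσ σ
    rw [map_sum]
    simp only [map_pow, hπ]
    exact Equiv.sum_comp π (fun i => θ i ^ m)
  simpa [Fin.sum_univ_four] using this

theorem dy_root3 {a1 a2 a3 : Ω} {e1 e2 e3 : ℚ_[2]} (h1 : a1 + a2 + a3 = algebraMap ℚ_[2] Ω e1)
    (h2 : a1 * a2 + a1 * a3 + a2 * a3 = algebraMap ℚ_[2] Ω e2)
    (h3 : a1 * a2 * a3 = algebraMap ℚ_[2] Ω e3) (σ : Ω ≃ₐ[ℚ_[2]] Ω) {x : Ω}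
    (hx : (x - a1) * ((x - a2) * (x - a3)) = 0) :
    σ x = a1 ∨ σ x = a2 ∨ σ x = a3 := by
  have poly : ∀ y : Ω, (y - a1) * ((y - a2) * (y - a3)) = y ^ 3 - algebraMap ℚ_[2] Ω e1 * y ^ 2 +
      algebraMap ℚ_[2] Ω e2 * y - algebraMap ℚ_[2] Ω e3 := by
    intro y; rw [← h1, ← h2, ← h3]; ring
  have k : (σ x - a1) * ((σ x - a2) * (σ x - a3)) = 0 := by
    rw [poly] at hx ⊢
    have := congrArg σ hx
    simpa only [map_add, map_sub, map_mul, map_pow, map_zero, AlgEquiv.commutes] using this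
  rcases mul_eq_zero.1 k with k | k
  · exact Or.inl (sub_eq_zero.1 k)
  rcases mul_eq_zero.1 k with k | k
  · exact Or.inr (Or.inl (sub_eq_zero.1 k))
  · exact Or.inr (Or.inr (sub_eq_zero.1 k))

/-- Data attached to a quartic tuple. -/
structure DyTup (θ : Fin 4 → Ω) (E : IntermediateField ℚ_[2] Ω) : Prop where
  inj : Function.Injective θ
  sum : θ 0 + θ 1 + θ 2 + θ 3 = 0
  act : ∀ σ : Ω ≃ₐ[ℚ_[2]] Ω, ∃ π : Equiv.Perm (Fin 4), ∀ i, σ (θ i) = θ (π i)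
  full : ∀ π : Equiv.Perm (Fin 4), ∃ σ : Ω ≃ₐ[ℚ_[2]] Ω, ∀ i, σ (θ i) = θ (π i)
  gen : E = IntermediateField.adjoin ℚ_[2] (Set.range θ)

theorem DyTup.reindex {θ : Fin 4 → Ω} {E : IntermediateField ℚ_[2] Ω} (H : DyTup θ E)
    (π : Equiv.Perm (Fin 4)) : DyTup (θ ∘ π) E := by
  refine ⟨H.inj.comp π.injective, ?_, ?_, ?_, ?_⟩
  · have h1 := Equiv.sum_comp π θ
    simp only [Fin.sum_univ_four] at h1
    simp only [Function.comp]
    rw [h1, H.sum]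
  · intro σ
    obtain ⟨ρ, hρ⟩ := H.act σ
    exact ⟨π.symm.permCongr ρ, fun i => by simp [Equiv.permCongr_apply, hρ]⟩
  · intro ρ
    obtain ⟨σ, hσ⟩ := H.full (π.permCongr ρ)
    exact ⟨σ, fun i => by simp [Equiv.permCongr_apply, hσ]⟩
  · rw [H.gen, Set.range_comp, π.surjective.range_eq, Set.image_univ]

theorem DyTup.elem {θ : Fin 4 → Ω} {E : IntermediateField ℚ_[2] Ω} (H : DyTup θ E) :
    ∃ e1 e2 n : ℚ_[2],
    (θ 0 + θ 1) ^ 2 + (θ 0 + θ 2) ^ 2 + (θ 0 + θ 3) ^ 2 = algebraMap ℚ_[2] Ω e1 ∧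
    (θ 0 + θ 1) ^ 2 * (θ 0 + θ 2) ^ 2 + (θ 0 + θ 1) ^ 2 * (θ 0 + θ 3) ^ 2 +
      (θ 0 + θ 2) ^ 2 * (θ 0 + θ 3) ^ 2 = algebraMap ℚ_[2] Ω e2 ∧
    (θ 0 + θ 1) * (θ 0 + θ 2) * (θ 0 + θ 3) = algebraMap ℚ_[2] Ω n := by
  have : CharZero Ω := charZero_of_injective_algebraMap (algebraMap ℚ_[2] Ω).injective
  obtain ⟨q2, h2⟩ := dy_sym H.act 2
  obtain ⟨q3, h3⟩ := dy_sym H.act 3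
  obtain ⟨q4, h4⟩ := dy_sym H.act 4
  have hs : θ 3 = -(θ 0 + θ 1 + θ 2) := by linear_combination H.sum
  refine ⟨q2, q4 - q2 ^ 2 / 4, q3 / 3, ?_, ?_, ?_⟩
  · rw [h2, hs]; ring
  · rw [map_sub, map_div₀, map_pow, h2, h4, map_ofNat, hs]; field_simp; ring
  · rw [map_div₀, h3, map_ofNat, hs]; field_simp; ring

theorem DyTup.distinct {θ : Fin 4 → Ω} {E : IntermediateField ℚ_[2] Ω} (H : DyTup θ E) :
    (θ 0 + θ 1) ^ 2 ≠ (θ 0 + θ 2) ^ 2 ∧ (θ 0 + θ 1) ≠ 0 ∧ (θ 0 + θ 2) ≠ 0 ∧ (θ 0 + θ 3) ≠ 0 := by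
  have d12 : θ 1 - θ 2 ≠ 0 := sub_ne_zero.2 (fun h => by simpa using H.inj h)
  have d03 : θ 0 - θ 3 ≠ 0 := sub_ne_zero.2 (fun h => by simpa using H.inj h)
  have d13 : θ 1 - θ 3 ≠ 0 := sub_ne_zero.2 (fun h => by simpa using H.inj h)
  have key : ∀ i j k : Fin 4, i ≠ j → i ≠ k → j ≠ k → θ i + θ j ≠ 0 := by
    intro i j k hij hik hjk h0
    obtain ⟨σ, hσ⟩ := H.full (Equiv.swap j k)
    have h1 := congrArg σ h0
    rw [map_add, hσ, hσ, map_zero, Equiv.swap_apply_of_ne_of_ne hij hik, Equiv.swap_apply_left] at h1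
    exact hjk (H.inj (by linear_combination h0 - h1))
  refine ⟨?_, key 0 1 2 (by decide) (by decide) (by decide), key 0 2 1 (by decide) (by decide) (by decide),
    key 0 3 1 (by decide) (by decide) (by decide)⟩
  intro h
  apply mul_ne_zero d12 d03
  linear_combination h - (θ 1 - θ 2) * H.sum

theorem DyTup.cubic {v : Ω → ℝ} (hv : DyVal v) {θ : Fin 4 → Ω} {E : IntermediateField ℚ_[2] Ω}
    (H : DyTup θ E) : ∃ ϖ : Ω, ϖ ^ 3 = 2 ∧
      ∀ σ : Ω ≃ₐ[ℚ_[2]] Ω, σ ((θ 0 + θ 1) ^ 2) = (θ 0 + θ 1) ^ 2 → σ ϖ = ϖ := by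
  obtain ⟨e1, e2, n, h1, h2, h3⟩ := H.elem
  obtain ⟨c, hc⟩ := H.full (Equiv.swap 1 2 * Equiv.swap 2 3)
  obtain ⟨t, ht⟩ := H.full (Equiv.swap 2 3)
  have c0 : c (θ 0) = θ 0 := by rw [hc]; congr 1
  have c1 : c (θ 1) = θ 2 := by rw [hc]; congr 1
  have c2 : c (θ 2) = θ 3 := by rw [hc]; congr 1
  have c3 : c (θ 3) = θ 1 := by rw [hc]; congr 1
  have t0 : t (θ 0) = θ 0 := by rw [ht]; congr 1
  have t1 : t (θ 1) = θ 1 := by rw [ht]; congr 1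
  have t2 : t (θ 2) = θ 3 := by rw [ht]; congr 1
  have t3 : t (θ 3) = θ 2 := by rw [ht]; congr 1
  refine dy_cubic hv (e3 := n ^ 2) h1 h2 ?_ H.distinct.1 c t ?_ ?_ ?_ ?_ ?_ ?_
  · rw [map_pow, ← h3]; ring
  all_goals simp only [map_pow, map_add, c0, c1, c2, c3, t0, t1, t2, t3]

theorem dy_tri_of_s4 (h : DyFrame p w c t) {v : Ω → ℝ} (hv : DyVal v)
    {E : IntermediateField ℚ_[2] Ω} (hE : DyS4 E) :
    ∃ (g1 g2 g3 : Ω) (a b e n : ℚ_[2]), DyTri p w g1 g2 g3 a b e n ∧ ¬ DyL p g1 ∧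
      E = IntermediateField.adjoin ℚ_[2] {g1, g2, g3} := by
  have := h.char0
  obtain ⟨θ, hinj, hsum, hact, hfull, hgen⟩ := dy_tuple_of_s4 E hE
  have H0 : DyTup θ E := ⟨hinj, by simpa [Fin.sum_univ_four] using hsum, hact, hfull, hgen⟩
  obtain ⟨ϖ, hϖ, hst⟩ := H0.cubic hv
  obtain ⟨ρ, hρ⟩ := dy_conj3 hϖ h.hp
  obtain ⟨π, hπ⟩ := hact ρ
  have H := H0.reindex π
  have stab : ∀ σ : Ω ≃ₐ[ℚ_[2]] Ω, σ (((θ ∘ π) 0 + (θ ∘ π) 1) ^ 2) =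
      ((θ ∘ π) 0 + (θ ∘ π) 1) ^ 2 → σ p = p := by
    intro σ hσ
    have e1 : ((θ ∘ π) 0 + (θ ∘ π) 1) ^ 2 = ρ ((θ 0 + θ 1) ^ 2) := by
      simp [hπ]
    rw [e1] at hσ
    have := hst (ρ.symm * σ * ρ) (by
      simp only [AlgEquiv.mul_apply]
      rw [hσ, AlgEquiv.symm_apply_apply])
    simp only [AlgEquiv.mul_apply] at this
    rw [AlgEquiv.symm_apply_eq, hρ] at this
    exact this
  generalize θ ∘ π = θ at H stab
  obtain ⟨e1, e2, n, h1, h2, h3⟩ := H.elem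
  obtain ⟨hne, n1, n2, n3⟩ := H.distinct
  have hgen := H.gen
  rw [dy_adj θ H.sum] at hgen
  have hn : n ≠ 0 := by
    rintro rfl
    rw [map_zero] at h3
    exact mul_ne_zero (mul_ne_zero n1 n2) n3 h3
  have hnL : ¬ DyL p (θ 0 + θ 1) := by
    intro hL
    obtain ⟨σ, hσ⟩ := H.full (Equiv.swap 0 2 * Equiv.swap 1 3)
    have s0 : σ (θ 0) = θ 2 := by rw [hσ]; congr 1
    have s1 : σ (θ 1) = θ 3 := by rw [hσ]; congr 1
    have sg : σ (θ 0 + θ 1) = -(θ 0 + θ 1) := by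
      rw [map_add, s0, s1]; linear_combination H.sum
    have := hL σ (stab σ (by rw [map_pow, sg]; ring))
    rw [sg] at this
    exact n1 (self_eq_neg.1 this.symm)
  have h3' : (θ 0 + θ 1) ^ 2 * (θ 0 + θ 2) ^ 2 * (θ 0 + θ 3) ^ 2 = algebraMap ℚ_[2] Ω (n ^ 2) := by
    rw [map_pow, ← h3]; ring
  generalize θ 0 + θ 1 = g1 at *
  generalize θ 0 + θ 2 = g2 at *
  generalize θ 0 + θ 3 = g3 at *
  have orb : ∀ σ : Ω ≃ₐ[ℚ_[2]] Ω, σ (g1 ^ 2) = g1 ^ 2 ∨ σ (g1 ^ 2) = g2 ^ 2 ∨ σ (g1 ^ 2) = g3 ^ 2 :=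
    fun σ => dy_root3 h1 h2 h3' σ (by ring)
  have hcp : c p ≠ p := by
    rw [h.cp]; intro hh
    exact h.w1 (mul_right_cancel₀ h.p0 (by rw [hh, one_mul]))
  have hccp : c (c p) ≠ p := by
    intro hh
    apply hcp
    have := h.cccp
    rw [hh] at this
    exact this
  have k1 : c (g1 ^ 2) ≠ g1 ^ 2 := fun hh => hcp (stab c hh)
  have k2 : c (c (g1 ^ 2)) ≠ g1 ^ 2 := fun hh => hccp (stab (c * c) hh)
  have k3 : c (c (g1 ^ 2)) ≠ c (g1 ^ 2) := fun hh => k1 (c.injective hh)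
  have hL : DyL p (g1 ^ 2) := by
    intro σ hσ
    have o : σ (g1 ^ 2) = g1 ^ 2 ∨ σ (g1 ^ 2) = c (g1 ^ 2) ∨ σ (g1 ^ 2) = c (c (g1 ^ 2)) := by
      have o1 := orb σ
      have o2 := orb c
      have o3 := orb (c * c)
      simp only [AlgEquiv.mul_apply] at o3
      grind
    rcases o with o | o | o
    · exact o
    · exfalso
      have := stab (c.symm * σ) (by rw [AlgEquiv.mul_apply, o, AlgEquiv.symm_apply_apply])
      rw [AlgEquiv.mul_apply, hσ, AlgEquiv.symm_apply_eq] at this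
      exact hcp this.symm
    · exfalso
      have := stab (c.symm * (c.symm * σ)) (by
        rw [AlgEquiv.mul_apply, AlgEquiv.mul_apply, o, AlgEquiv.symm_apply_apply,
          AlgEquiv.symm_apply_apply])
      rw [AlgEquiv.mul_apply, AlgEquiv.mul_apply, hσ, AlgEquiv.symm_apply_eq,
        AlgEquiv.symm_apply_eq] at this
      exact hccp this.symm
  obtain ⟨a, b, e, hF⟩ := hL.exists_F h.hp
  have f2 : c (g1 ^ 2) = dyF a b e (w * p) := by rw [hF, dyF_gal, h.cp]
  have f3 : c (c (g1 ^ 2)) = dyF a b e (w ^ 2 * p) := by rw [hF, dyF_gal, dyF_gal, h.ccp]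
  have o3 := orb (c * c)
  simp only [AlgEquiv.mul_apply] at o3
  rcases (orb c).resolve_left k1 with o | o
  · have o' := (o3.resolve_left k2).resolve_left (fun hh => k3 (hh.trans o.symm))
    exact ⟨g1, g2, g3, a, b, e, n, ⟨hF, by rw [← f2, o], by rw [← f3, o'], hn, h3⟩, hnL, hgen⟩
  · have o' := (o3.resolve_left k2).resolve_right (fun hh => k3 (hh.trans o.symm))
    refine ⟨g1, g3, g2, a, b, e, n, ⟨hF, by rw [← f2, o], by rw [← f3, o'], hn, ?_⟩, hnL, ?_⟩
    · rw [← h3]; ring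
    · rw [hgen, Set.pair_comm]

theorem dy_same_eq (h : DyFrame p w c t) {g1 g2 g3 h1 h2 h3 : Ω} {a b e n a' b' e' n' : ℚ_[2]}
    (T : DyTri p w g1 g2 g3 a b e n) (T' : DyTri p w h1 h2 h3 a' b' e' n') (hLg : ¬ DyL p g1)
    (hLh : ¬ DyL p h1) {s : Ω} (hs : DyL p s) (hs0 : s ≠ 0)
    (hg : dyF a b e p = s ^ 2 * dyF a' b' e' p) :
    IntermediateField.adjoin ℚ_[2] {g1, g2, g3} = IntermediateField.adjoin ℚ_[2] {h1, h2, h3} := by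
  have hsq : g1 ^ 2 = (s * h1) ^ 2 := by rw [T.s1, mul_pow, T'.s1, hg]
  have key : ∀ r : Ω, DyL p r → r ≠ 0 → g1 = r * h1 →
      IntermediateField.adjoin ℚ_[2] {g1, g2, g3} =
        IntermediateField.adjoin ℚ_[2] {h1, h2, h3} := by
    intro r hr hr0 hg
    apply le_antisymm
    · exact T.same h T' hLh hr hg
    · exact T'.same h T hLg hr.inv (by rw [hg]; field_simp)
  rcases dy_pm hsq with hh | hh
  · exact key s hs hs0 hh
  · exact key (-s) (fun σ hσ => by rw [map_neg, hs σ hσ]) (neg_ne_zero.2 hs0) (by rw [hh]; ring)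

theorem dy_main : {E : IntermediateField ℚ_[2] Ω | DyS4 E}.ncard = 3 := by
  obtain ⟨v, hv⟩ := dy_val_exists (Ω := Ω)
  obtain ⟨p, w, c, t, h⟩ := dy_frame (Ω := Ω)
  obtain ⟨ρ, hρ⟩ := dy_rho h hv
  have hρ0 : ρ ≠ 0 := by rintro rfl; norm_num at hρ
  obtain ⟨a1, a2, a3, n1, A, LA, SA⟩ := dy_build h (a := 3) (b := 3) (e := 0) (n := 9)
    (by norm_num) (by norm_num [dyN]) (fun s hs => dy_lower1 h hs)
  obtain ⟨b1, b2, b3, n2, B, LB, SB⟩ := dy_build h (a := 1) (b := 0) (e := 2) (n := ρ)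
    hρ0 (by rw [hρ]; norm_num [dyN]) (fun s hs => dy_lower2 h hs)
  obtain ⟨c1, c2, c3, n3, C, LC, SC⟩ := dy_build h (a := 15) (b := 3) (e := 6) (n := 9 * ρ)
    (mul_ne_zero (by norm_num) hρ0) (by rw [mul_pow, hρ]; norm_num [dyN])
    (fun s hs => dy_lower3 h hs)
  have u3 : dyF 3 3 0 p * dyF 1 0 2 p = dyF 15 3 6 p := by
    simp only [dyF, map_ofNat, map_zero, map_one]
    linear_combination 6 * h.hp
  have AB : IntermediateField.adjoin ℚ_[2] {a1, a2, a3} ≠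
      IntermediateField.adjoin ℚ_[2] {b1, b2, b3} := by
    intro hE
    refine dy_lower3 h (A.diff h B hE) ?_
    rw [mul_pow, A.s1, B.s1, u3]
  have AC : IntermediateField.adjoin ℚ_[2] {a1, a2, a3} ≠
      IntermediateField.adjoin ℚ_[2] {c1, c2, c3} := by
    intro hE
    have h0 : dyF 3 3 0 p ≠ 0 := by rw [← A.s1]; exact pow_ne_zero 2 A.ne1
    refine dy_lower2 h ((A.diff h C hE).mul (DyL.F (p := p) 3 3 0).inv) ?_
    rw [mul_pow, mul_pow, A.s1, C.s1, ← u3]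
    field_simp
  have BC : IntermediateField.adjoin ℚ_[2] {b1, b2, b3} ≠
      IntermediateField.adjoin ℚ_[2] {c1, c2, c3} := by
    intro hE
    have h0 : dyF 1 0 2 p ≠ 0 := by rw [← B.s1]; exact pow_ne_zero 2 B.ne1
    refine dy_lower1 h ((B.diff h C hE).mul (DyL.F (p := p) 1 0 2).inv) ?_
    rw [mul_pow, mul_pow, B.s1, C.s1, ← u3]
    field_simp
  rw [Set.ncard_eq_three]
  refine ⟨_, _, _, AB, AC, BC, ?_⟩
  ext E
  simp only [Set.mem_setOf_eq, Set.mem_insert_iff, Set.mem_singleton_iff]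
  constructor
  · intro hE
    obtain ⟨g1, g2, g3, a, b, e, n, T, hL, rfl⟩ := dy_tri_of_s4 h hv hE
    obtain ⟨s, hs0, hs, k | k | k | k⟩ := dy_upper_cases h hv a b e n T.hn (T.norm h)
    · exfalso
      apply hL
      rw [← T.s1] at k
      rcases dy_pm k with k | k
      · rw [k]; exact hs
      · rw [k]; intro σ hσ; rw [map_neg, hs σ hσ]
    · exact Or.inl (dy_same_eq h T A hL LA hs hs0 k)
    · exact Or.inr (Or.inl (dy_same_eq h T B hL LB hs hs0 k))
    · exact Or.inr (Or.inr (dy_same_eq h T C hL LC hs hs0 k))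
  · rintro (rfl | rfl | rfl)
    · exact SA
    · exact SB
    · exact SC

end FinalPart

theorem stmt_15 (Ω : Type) [Field Ω] [Algebra ℚ_[2] Ω] [IsAlgClosure ℚ_[2] Ω] :
    {E : IntermediateField ℚ_[2] Ω | FiniteDimensional ℚ_[2] ↥E ∧ IsGalois ℚ_[2] ↥E ∧
      Nonempty ((↥E ≃ₐ[ℚ_[2]] ↥E) ≃* Equiv.Perm (Fin 4))}.ncard = 3 := by
  have : IsAlgClosed Ω := IsAlgClosure.isAlgClosed ℚ_[2]
  have : Algebra.IsAlgebraic ℚ_[2] Ω := IsAlgClosure.isAlgebraic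
  have : Normal ℚ_[2] Ω := IsAlgClosure.normal ℚ_[2] Ω
  have : IsGalois ℚ_[2] Ω := {}
  exact dy_main
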